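/- There exists a constant C₂ such that for every f ∈ S³ and all d ∈ ℕ∖{1}: ‖G f − G_d f‖_{L²(ρ_d)} ≤ C₂·(Σ_{i=1}^3 ‖f^{(i)}‖_{∞,1/2})·√(log(d)/d), where G f is interpreted as a function on ℝ^d through the first coordinate. -/

import Mathlib

/-!
Write `L = log ρ`, `s = l / √d` and let `z` be a standard Gaussian vector, so that the proposal is
`Y = x + s z` and the acceptance probability is `min 1 (exp S)` with `S = ∑ (L(x_i + s z_i) - L(x_i))`
(`Sx`). Everything reduces to showing that, conditionally on `x`, the law of `S` is close to
`N(-l²J/2, l²J)`.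

*Pointwise estimate.* Replace `min 1 (exp r)` by a smooth function `m` with `|m|, |m'| ≤ 1`. A Taylor
expansion of `f(x₁ + s z₁) - f(x₁)` leaves the expectations of `z₁ m(S)` and `z₁² m(S)`, and Gaussian
integration by parts turns them into expectations of `m(S)` and `m'(S)`, up to errors of order `s`
(`gen_smooth`). These are compared with the corresponding Gaussian expectations by Stein's method:
the solution of Stein's equation has bounds that depend only on the sup-norm of the right-hand side
(`stein_std`, `stein_scaled`), hence they are uniform in `m` and apply to `m'` as well. Removing the
linear part of `S` by integration by parts bounds the comparison error by `Dx` (`stein_cmp`).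
With `m = mS a`, `mS a r = (1 + e^{-ar})^{-1/a}`, and `a → ∞`, the Gaussian expectations of `m` and
`m'` converge to `2Φ(-l√J/2)` and `Φ(-l√J/2)`, which are the coefficients of the limiting generator
(`gen_bound`).

*Integration over the target.* Super-exponential tails give `ρ` all exponential moments (`nu_exp`).
The leading terms of `Dx` are `s²` times sums of independent variables that are centred, because
`J = ρ((L')²) = -ρ(L'')` (`eta2_mean`), so they are of order `s² √d`, which is of order `s`, in `L²`;
the remaining terms are of this order as well (`outer_bound`). The `L²` error is therefore at most a
constant times `d^{-1/2}`, and `log d ≥ log 2` gives the claim.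
-/

open MeasureTheory ProbabilityTheory Filter Set

noncomputable section

/-- The exponentially-weighted sup-norm `‖g‖_{∞,s} = sup_x e^{-s|x|} |g x|`. -/
def normIS (g : ℝ → ℝ) (s : ℝ) : ℝ := ⨆ x : ℝ, Real.exp (-(s * |x|)) * |g x|

/-- Membership in the space `Sⁿ`: `n`-times continuously differentiable with all
iterated derivatives up to order `n` of sub-exponential growth. -/
def MemS (n : ℕ) (g : ℝ → ℝ) : Prop :=
  ContDiff ℝ n g ∧ ∀ s > (0:ℝ), ∀ i ≤ n,
    BddAbove (Set.range fun x => Real.exp (-(s * |x|)) * |iteratedDeriv i g x|)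

/-- A positive sequence is sluggish if it tends to infinity but `a d / √(log d)` stays bounded. -/
def Sluggish (a : ℕ → ℝ) : Prop :=
  (∀ d, 0 < a d) ∧ Tendsto a atTop atTop ∧
    ∃ M : ℝ, ∀ d : ℕ, 2 ≤ d → a d / Real.sqrt (Real.log d) ≤ M

/-- `(log ρ)'` -/
def dl (ρ : ℝ → ℝ) : ℝ → ℝ := deriv fun x => Real.log (ρ x)

/-- `(log ρ)''` -/
def d2l (ρ : ℝ → ℝ) : ℝ → ℝ := deriv (dl ρ)

/-- `ρ(g) = ∫ g dρ` -/
def rhoE (ρ g : ℝ → ℝ) : ℝ := ∫ x, g x * ρ x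

/-- `J = ρ(((log ρ)')²)` -/
def Jc (ρ : ℝ → ℝ) : ℝ := rhoE ρ fun x => (dl ρ x) ^ 2

/-- super-exponential tails: `(x/|x|)·(log ρ)'(x) → -∞` as `|x| → ∞`. -/
def SuperExpTails (ρ : ℝ → ℝ) : Prop :=
  Tendsto (dl ρ) atTop atBot ∧ Tendsto (dl ρ) atBot atTop

/-- standard normal CDF -/
def stdCDF (t : ℝ) : ℝ := ((gaussianReal 0 1) (Set.Iic t)).toReal

/-- the constant `h(l) = 2l²Φ(-l√J/2)` -/
def hc (ρ : ℝ → ℝ) (l : ℝ) : ℝ := 2 * l ^ 2 * stdCDF (-(l * Real.sqrt (Jc ρ)) / 2)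

/-- the limiting (Langevin) generator `G f = (h(l)/2)(f'' + (log ρ)' f')` -/
def Gop (ρ : ℝ → ℝ) (l : ℝ) (f : ℝ → ℝ) (x : ℝ) : ℝ :=
  hc ρ l / 2 * (deriv (deriv f) x + dl ρ x * deriv f x)

/-- the product measure `ρ_d` on `ℝ^d` -/
def pm (ρ : ℝ → ℝ) (d : ℕ) : Measure (Fin d → ℝ) :=
  Measure.pi fun _ => volume.withDensity fun x => ENNReal.ofReal (ρ x)

/-- law of the proposal `Y ~ N(x, l²/d · I_d)` -/
def gaussPi (l : ℝ) (d : ℕ) (x : Fin d → ℝ) : Measure (Fin d → ℝ) :=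
  Measure.pi fun i => gaussianReal (x i) ((l ^ 2 / (d:ℝ)).toNNReal)

/-- the RWM generator `G_d` -/
def Gd (ρ : ℝ → ℝ) (l : ℝ) (d : ℕ) [NeZero d] (f : ℝ → ℝ) (x : Fin d → ℝ) : ℝ :=
  (d:ℝ) * ∫ y, (f (y 0) - f (x 0)) * min 1 ((∏ i, ρ (y i)) / ∏ i, ρ (x i)) ∂(gaussPi l d x)

/-- the set `A` associated with the constant `c_A` -/
def Aset (ρ : ℝ → ℝ) (c : ℝ) : Set ℝ :=
  {x | |d2l ρ x| < (dl ρ x) ^ 2 ∧ 1 / c < |dl ρ x| ∧ |dl ρ x| < c}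

/-- indices `2,…,d` (all coordinates except the first) -/
def restIdx (d : ℕ) : Finset (Fin d) := Finset.univ.filter fun i => (i : ℕ) ≠ 0

/-- the typical sets `𝒜_d` -/
def Ad (ρ : ℝ → ℝ) (c : ℝ) (a : ℕ → ℝ) (d : ℕ) : Set (Fin d → ℝ) :=
  {x | (1 / ((d : ℝ) - 1)) * ∑ i ∈ restIdx d, Real.exp |x i| < 2 * rhoE ρ (fun t => Real.exp |t|)
    ∧ (∫ t in Aset ρ c, ρ t) / 2 <
        (1 / ((d : ℝ) - 1)) * ∑ i ∈ restIdx d, (Aset ρ c).indicator (fun _ => (1:ℝ)) (x i)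
    ∧ (1 / ((d : ℝ) - 1)) * |∑ i ∈ restIdx d, ((dl ρ (x i)) ^ 2 - Jc ρ)| <
        a d / Real.sqrt d * Real.sqrt (3 * rhoE ρ fun t => ((dl ρ t) ^ 2 - Jc ρ) ^ 2)
    ∧ (1 / ((d : ℝ) - 1)) * |∑ i ∈ restIdx d, (d2l ρ (x i) + Jc ρ)| <
        a d / Real.sqrt d * Real.sqrt (3 * rhoE ρ fun t => (d2l ρ t + Jc ρ) ^ 2)}

/-- `K(x,y)` -/
def Kf (ρ : ℝ → ℝ) (c : ℝ) (x y : ℝ) : ℝ :=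
  dl ρ x * (y - x) + d2l ρ x / 2 * (y - x) ^ 2
    + (dl ρ x) ^ 3 * (Aset ρ c).indicator (fun _ => (1:ℝ)) x / 3 * (y - x) ^ 3

/-- `Σ_{i=2}^d K(x_i, Y_i)` -/
def SK (ρ : ℝ → ℝ) (c : ℝ) (d : ℕ) (x Y : Fin d → ℝ) : ℝ :=
  ∑ i ∈ restIdx d, Kf ρ c (x i) (Y i)

/-- `β(x,y)` -/
def betaF (ρ : ℝ → ℝ) (c l : ℝ) (d : ℕ) [NeZero d] (x : Fin d → ℝ) (y : ℝ) : ℝ :=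
  ∫ Y, min 1 (Real.exp (dl ρ (x 0) * (y - x 0) + SK ρ c d x Y)) ∂(gaussPi l d x)

/-- `G̃_d` -/
def tGd (ρ : ℝ → ℝ) (c l : ℝ) (d : ℕ) [NeZero d] (f : ℝ → ℝ) (x : Fin d → ℝ) : ℝ :=
  (d:ℝ) * ∫ y, (f y - f (x 0)) * betaF ρ c l d x y
    ∂(gaussianReal (x 0) ((l ^ 2 / (d:ℝ)).toNNReal))

/-- `Ĝ_d` -/
def hGd (ρ : ℝ → ℝ) (c l : ℝ) (d : ℕ) [NeZero d] (f : ℝ → ℝ) (x : Fin d → ℝ) : ℝ :=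
  l ^ 2 / 2 * deriv (deriv f) (x 0) * (∫ Y, min 1 (Real.exp (SK ρ c d x Y)) ∂(gaussPi l d x))
    + l ^ 2 * deriv f (x 0) * dl ρ (x 0) *
      (∫ Y, (Set.Iio (0:ℝ)).indicator Real.exp (SK ρ c d x Y) ∂(gaussPi l d x))

/-- `𝒩(x,Y)` -/
def Nf (ρ : ℝ → ℝ) (l : ℝ) (d : ℕ) (x Y : Fin d → ℝ) : ℝ :=
  l ^ 2 / (2 * (d:ℝ)) * ∑ i ∈ restIdx d, d2l ρ (x i)
    + ∑ i ∈ restIdx d, dl ρ (x i) * (Y i - x i)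

/-- `Ğ_d` -/
def bGd (ρ : ℝ → ℝ) (l : ℝ) (d : ℕ) [NeZero d] (f : ℝ → ℝ) (x : Fin d → ℝ) : ℝ :=
  l ^ 2 / 2 * deriv (deriv f) (x 0) * (∫ Y, min 1 (Real.exp (Nf ρ l d x Y)) ∂(gaussPi l d x))
    + l ^ 2 * deriv f (x 0) * dl ρ (x 0) *
      (∫ Y, (Set.Iio (0:ℝ)).indicator Real.exp (Nf ρ l d x Y) ∂(gaussPi l d x))

/-! ### Functions with exponentially bounded derivatives -/

/-- `g` is three times differentiable with derivatives `g₁, g₂, g₃`, each bounded by `C e^{|x|}`. -/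
structure ExpC3 (g g1 g2 g3 : ℝ → ℝ) (C : ℝ) : Prop where
  hd1 : ∀ x, HasDerivAt g (g1 x) x
  hd2 : ∀ x, HasDerivAt g1 (g2 x) x
  hd3 : ∀ x, HasDerivAt g2 (g3 x) x
  nonneg : 0 ≤ C
  b1 : ∀ x, |g1 x| ≤ C * Real.exp |x|
  b2 : ∀ x, |g2 x| ≤ C * Real.exp |x|
  b3 : ∀ x, |g3 x| ≤ C * Real.exp |x|

/-- One step of a Taylor estimate: integrating a bound on the derivative. -/
lemma taylor_step {u u' : ℝ → ℝ} (hu : ∀ t, HasDerivAt u (u' t) t) (h0 : u 0 = 0) {A c : ℝ}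
    (hA : 0 ≤ A) (k : ℕ) (hb : ∀ t, |u' t| ≤ A * |t| ^ k * Real.exp (c + |t|)) (h : ℝ) :
    |u h| ≤ A * |h| ^ (k + 1) * Real.exp (c + |h|) := by
  have := (convex_closedBall (0:ℝ) |h|).norm_image_sub_le_of_norm_hasDerivWithin_le
    (f := u) (f' := u') (C := A * |h| ^ k * Real.exp (c + |h|)) (x := 0) (y := h)
    (fun x _ => (hu x).hasDerivWithinAt) (fun x hx => ?_) (by simp) (by simp)
  · rw [h0, sub_zero, sub_zero, Real.norm_eq_abs, Real.norm_eq_abs] at this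
    calc _ ≤ _ := this
      _ = _ := by ring
  · have hx' : |x| ≤ |h| := by simpa using hx
    rw [Real.norm_eq_abs]
    refine (hb x).trans ?_
    gcongr

namespace ExpC3
variable {g g1 g2 g3 : ℝ → ℝ} {C : ℝ}

lemma taylor1 (H : ExpC3 g g1 g2 g3 C) (x h : ℝ) :
    |g (x + h) - g x| ≤ C * |h| * Real.exp (|x| + |h|) := by
  have := taylor_step (u := fun t => g (x + t) - g x) (u' := fun t => g1 (x + t))
    (fun t => ((H.hd1 (x + t)).comp_const_add x t).sub_const _) (by simp) H.nonneg 0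
    (c := |x|) (fun t => ?_) h
  · simpa using this
  · refine (H.b1 _).trans ?_
    simp only [pow_zero, mul_one]
    exact mul_le_mul_of_nonneg_left (Real.exp_le_exp.2 (abs_add_le _ _)) H.nonneg

lemma taylor1' (H : ExpC3 g g1 g2 g3 C) (x h : ℝ) :
    |g1 (x + h) - g1 x| ≤ C * |h| * Real.exp (|x| + |h|) := by
  have := taylor_step (u := fun t => g1 (x + t) - g1 x) (u' := fun t => g2 (x + t))
    (fun t => ((H.hd2 (x + t)).comp_const_add x t).sub_const _) (by simp) H.nonneg 0
    (c := |x|) (fun t => ?_) h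
  · simpa using this
  · refine (H.b2 _).trans ?_
    simp only [pow_zero, mul_one]
    exact mul_le_mul_of_nonneg_left (Real.exp_le_exp.2 (abs_add_le _ _)) H.nonneg

lemma taylor3 (H : ExpC3 g g1 g2 g3 C) (x h : ℝ) :
    |g (x + h) - g x - g1 x * h - g2 x * h ^ 2 / 2| ≤ C * |h| ^ 3 * Real.exp (|x| + |h|) := by
  have s1 := taylor_step (u := fun t => g2 (x + t) - g2 x) (u' := fun t => g3 (x + t))
    (fun t => ((H.hd3 (x + t)).comp_const_add x t).sub_const _) (by simp) H.nonneg 0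
    (c := |x|) (fun t => by
      refine (H.b3 _).trans ?_
      simp only [pow_zero, mul_one]
      exact mul_le_mul_of_nonneg_left (Real.exp_le_exp.2 (abs_add_le _ _)) H.nonneg)
  have s2 := taylor_step (u := fun t => g1 (x + t) - g1 x - g2 x * t)
    (u' := fun t => g2 (x + t) - g2 x)
    (fun t => ((((H.hd2 (x + t)).comp_const_add x t).sub_const (g1 x)).sub
        ((hasDerivAt_id t).const_mul (g2 x))).congr_deriv (by simp))
    (by simp) H.nonneg 1 (c := |x|) s1
  refine taylor_step (u := fun t => g (x + t) - g x - g1 x * t - g2 x * t ^ 2 / 2)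
    (u' := fun t => g1 (x + t) - g1 x - g2 x * t)
    (fun t => ?_) (by simp) H.nonneg 2 (c := |x|) s2 h
  have e := ((((H.hd1 (x + t)).comp_const_add x t).sub_const (g x)).sub
        ((hasDerivAt_id t).const_mul (g1 x))).sub
        (((hasDerivAt_pow 2 t).const_mul (g2 x)).div_const 2)
  refine e.congr_deriv ?_
  simp
  ring

lemma cont (H : ExpC3 g g1 g2 g3 C) : Continuous g :=
  continuous_iff_continuousAt.2 fun x => (H.hd1 x).continuousAt
lemma cont1 (H : ExpC3 g g1 g2 g3 C) : Continuous g1 :=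
  continuous_iff_continuousAt.2 fun x => (H.hd2 x).continuousAt
lemma cont2 (H : ExpC3 g g1 g2 g3 C) : Continuous g2 :=
  continuous_iff_continuousAt.2 fun x => (H.hd3 x).continuousAt

end ExpC3

/-! ### The Gaussian measure: integrability and integration by parts -/

/-- The standard Gaussian measure on `ℝ`. -/
abbrev gam : Measure ℝ := gaussianReal 0 1

/-- The standard Gaussian measure on `ℝ^d`. -/
abbrev gamPi (d : ℕ) : Measure (Fin d → ℝ) := Measure.pi fun _ => gam

/-- The exponential moment `∫ e^{c|z|} dγ(z)`. -/
def gK (c : ℝ) : ℝ := ∫ z, Real.exp (c * |z|) ∂gam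

lemma integrable_gam_exp (c : ℝ) : Integrable (fun z => Real.exp (c * |z|)) gam :=
  integrable_exp_mul_abs (X := fun z => z) (integrable_exp_mul_gaussianReal c)
    (integrable_exp_mul_gaussianReal (-c))

lemma gK_nonneg (c : ℝ) : 0 ≤ gK c := integral_nonneg fun _ => (Real.exp_pos _).le

lemma gK_mono {a b : ℝ} (h : a ≤ b) : gK a ≤ gK b :=
  integral_mono (integrable_gam_exp a) (integrable_gam_exp b) fun z =>
    Real.exp_le_exp.2 (mul_le_mul_of_nonneg_right h (abs_nonneg z))

lemma gam_integrable_of_bound {g : ℝ → ℝ} (hg : Continuous g) {A c : ℝ}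
    (hb : ∀ z, |g z| ≤ A * Real.exp (c * |z|)) : Integrable g gam :=
  ((integrable_gam_exp c).const_mul A).mono' hg.aestronglyMeasurable
    (Eventually.of_forall hb)

lemma hasDerivAt_gaussianPDF (x : ℝ) :
    HasDerivAt (gaussianPDFReal 0 1) (-x * gaussianPDFReal 0 1 x) x := by
  have : gaussianPDFReal 0 1 = fun x => (√(2 * Real.pi * (1:NNReal)))⁻¹ *
      Real.exp (-(x - 0) ^ 2 / (2 * (1:NNReal))) := by
    ext x; rfl
  rw [this]
  have h1 : HasDerivAt (fun x : ℝ => -(x - 0) ^ 2 / (2 * ((1:NNReal):ℝ))) (-x) x := by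
    have := ((((hasDerivAt_id x).sub_const 0).pow 2).neg).div_const (2 * ((1:NNReal):ℝ))
    refine this.congr_deriv ?_
    simp
    ring
  refine (h1.exp.const_mul _).congr_deriv ?_
  ring

lemma gam_integrable_iff (g : ℝ → ℝ) :
    Integrable g gam ↔ Integrable (fun x => gaussianPDFReal 0 1 x * g x) := by
  rw [gam, gaussianReal_of_var_ne_zero 0 one_ne_zero]
  rw [integrable_withDensity_iff_integrable_smul₀' (measurable_gaussianPDF _ _).aemeasurable
    (Eventually.of_forall fun _ => gaussianPDF_lt_top)]
  simp [toReal_gaussianPDF]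

/-- Gaussian integration by parts on the line. -/
lemma gam_ibp {g g' : ℝ → ℝ} (hg : ∀ z, HasDerivAt g (g' z) z)
    (i0 : Integrable g gam) (i1 : Integrable (fun z => z * g z) gam) (i2 : Integrable g' gam) :
    ∫ z, (z * g z - g' z) ∂gam = 0 := by
  rw [gam, integral_gaussianReal_eq_integral_smul one_ne_zero]
  simp only [smul_eq_mul]
  have := integral_eq_zero_of_hasDerivAt_of_integrable
    (f := fun z => -(gaussianPDFReal 0 1 z * g z))
    (f' := fun z => gaussianPDFReal 0 1 z * (z * g z - g' z))
    (fun z => ?_) ?_ ?_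
  · exact this
  · refine ((hasDerivAt_gaussianPDF z).mul (hg z)).neg.congr_deriv ?_
    ring
  · exact (gam_integrable_iff _).1 (i1.sub i2)
  · exact ((gam_integrable_iff _).1 i0).neg

lemma gamPi_integrable_exp {d : ℕ} (c : ℝ) (i : Fin d) :
    Integrable (fun z : Fin d → ℝ => Real.exp (c * |z i|)) (gamPi d) :=
  integrable_comp_eval (μ := fun _ : Fin d => gam) (i := i)
    (f := fun z : ℝ => Real.exp (c * |z|)) (integrable_gam_exp c)

lemma gamPi_integral_exp {d : ℕ} (c : ℝ) (i : Fin d) :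
    ∫ z : Fin d → ℝ, Real.exp (c * |z i|) ∂(gamPi d) = gK c := by
  rw [gK, ← (measurePreserving_eval (fun _ : Fin d => gam) i).map_eq, integral_map]
  · exact (measurable_pi_apply i).aemeasurable
  · exact (by fun_prop : Continuous fun z : ℝ => Real.exp (c * |z|)).aestronglyMeasurable

lemma gamPi_integrable_of_bound {d : ℕ} {g : (Fin d → ℝ) → ℝ} (hg : Continuous g)
    (i : Fin d) {A c : ℝ} (hb : ∀ z, |g z| ≤ A * Real.exp (c * |z i|)) :
    Integrable g (gamPi d) :=
  ((gamPi_integrable_exp c i).const_mul A).mono' hg.aestronglyMeasurable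
    (Eventually.of_forall hb)

lemma gamPi_integral_le {d : ℕ} {g : (Fin d → ℝ) → ℝ}
    (i : Fin d) {A c : ℝ} (hb : ∀ z, |g z| ≤ A * Real.exp (c * |z i|)) :
    |∫ z, g z ∂(gamPi d)| ≤ A * gK c := by
  rw [← gamPi_integral_exp c i, ← integral_const_mul, ← Real.norm_eq_abs]
  exact norm_integral_le_of_norm_le ((gamPi_integrable_exp c i).const_mul A)
    (Eventually.of_forall hb)

/-- Gaussian integration by parts in the `i`-th coordinate of `ℝ^d`. -/
lemma gamPi_ibp {d : ℕ} (i : Fin d) {g g' : (Fin d → ℝ) → ℝ} (hg : Continuous g)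
    (hg' : Continuous g')
    (hd : ∀ z t, HasDerivAt (fun t => g (Function.update z i t)) (g' (Function.update z i t)) t)
    {A c : ℝ} (hb : ∀ z, |g z| ≤ A * Real.exp (c * |z i|))
    (hb' : ∀ z, |g' z| ≤ A * Real.exp (c * |z i|)) :
    ∫ z, z i * g z ∂(gamPi d) = ∫ z, g' z ∂(gamPi d) := by
  have key : ∀ z : ℝ, |z| ≤ Real.exp |z| := fun z =>
    (by linarith : |z| ≤ |z| + 1).trans (Real.add_one_le_exp _)
  have hz : ∀ a b : ℝ, |b| ≤ A * Real.exp (c * |a|) → |a * b| ≤ A * Real.exp ((c + 1) * |a|) := by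
    intro a b h
    rw [abs_mul]
    calc |a| * |b| ≤ Real.exp |a| * (A * Real.exp (c * |a|)) := by gcongr; exact key a
      _ = A * (Real.exp (c * |a|) * Real.exp |a|) := by ring
      _ = _ := by rw [← Real.exp_add]; ring_nf
  have i1 : Integrable (fun z : Fin d → ℝ => z i * g z) (gamPi d) :=
    gamPi_integrable_of_bound (by fun_prop) i (fun z => hz _ _ (hb z))
  have i2 : Integrable g' (gamPi d) := gamPi_integrable_of_bound hg' i hb'
  rw [← sub_eq_zero, ← integral_sub i1 i2]
  obtain ⟨n, rfl⟩ : ∃ n, d = n + 1 := ⟨d - 1, by have := i.pos; omega⟩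
  have mp := measurePreserving_piFinSuccAbove (fun _ : Fin (n + 1) => gam) i
  set e := MeasurableEquiv.piFinSuccAbove (fun _ : Fin (n + 1) => ℝ) i with he
  have mp' := mp.symm
  rw [← mp'.integral_comp' ]
  have i3 : Integrable (fun p => (e.symm p) i * g (e.symm p) - g' (e.symm p))
      (gam.prod (Measure.pi fun _ : Fin n => gam)) :=
    (mp'.integrable_comp_emb e.symm.measurableEmbedding).2 (i1.sub i2)
  rw [integral_prod_symm _ i3]
  refine integral_eq_zero_of_ae (Eventually.of_forall fun w => ?_)
  have hes : ∀ t : ℝ, e.symm (t, w) = i.insertNth t w := fun t => rfl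
  have hup : ∀ t : ℝ, (i.insertNth t w : Fin (n+1) → ℝ)
      = Function.update (i.insertNth 0 w : Fin (n+1) → ℝ) i t := by
    intro t; rw [Fin.update_insertNth]
  have hci : Continuous fun t : ℝ => (i.insertNth t w : Fin (n+1) → ℝ) := by
    rw [funext hup]
    exact continuous_const.update i continuous_id
  simp only [hes, Fin.insertNth_apply_same, Pi.zero_apply]
  have hbt : ∀ t, |g (i.insertNth t w)| ≤ A * Real.exp (c * |t|) := fun t => by
    have := hb (i.insertNth t w)
    rwa [Fin.insertNth_apply_same] at this
  have hbt' : ∀ t, |g' (i.insertNth t w)| ≤ A * Real.exp (c * |t|) := fun t => by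
    have := hb' (i.insertNth t w)
    rwa [Fin.insertNth_apply_same] at this
  refine gam_ibp (g := fun t => g (i.insertNth t w)) (g' := fun t => g' (i.insertNth t w))
    (fun t => ?_) ?_ ?_ ?_
  · have := hd (i.insertNth 0 w) t
    simpa only [Fin.update_insertNth] using this
  · exact gam_integrable_of_bound (hg.comp hci) hbt
  · exact gam_integrable_of_bound (continuous_id.mul (hg.comp hci)) (fun t => hz _ _ (hbt t))
  · exact gam_integrable_of_bound (hg'.comp hci) hbt'

/-! ### Stein's equation -/

/-- The standard normal density. -/
local notation "gpdf" => gaussianPDFReal 0 1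

lemma gpdf_pos (x : ℝ) : 0 < gpdf x := gaussianPDFReal_pos 0 1 x one_ne_zero

lemma gpdf_cont : Continuous gpdf :=
  continuous_iff_continuousAt.2 fun x => (hasDerivAt_gaussianPDF x).continuousAt

lemma integrable_neg_mul_gpdf : Integrable (fun x => -x * gpdf x) := by
  have : Integrable (fun x : ℝ => -x) gam :=
    gam_integrable_of_bound (by fun_prop) (A := 1) (c := 1) (fun z => by
      rw [abs_neg, one_mul, one_mul]
      exact (by linarith : |z| ≤ |z| + 1).trans (Real.add_one_le_exp _))
  refine ((gam_integrable_iff _).1 this).congr (Eventually.of_forall fun x => ?_)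
  simp only; ring

lemma gpdf_tail_Iic (w : ℝ) : ∫ t in Iic w, -t * gpdf t = gpdf w := by
  have h0 : Tendsto gpdf atBot (nhds 0) :=
    tendsto_zero_of_hasDerivAt_of_integrableOn_Iic (a := w)
      (fun x _ => hasDerivAt_gaussianPDF x) integrable_neg_mul_gpdf.integrableOn
      (integrable_gaussianPDFReal 0 1).integrableOn
  rw [integral_Iic_of_hasDerivAt_of_tendsto' (fun x _ => hasDerivAt_gaussianPDF x)
    integrable_neg_mul_gpdf.integrableOn h0, sub_zero]

lemma gpdf_tail_Ioi (w : ℝ) : ∫ t in Ioi w, t * gpdf t = gpdf w := by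
  have h0 : Tendsto gpdf atTop (nhds 0) :=
    tendsto_zero_of_hasDerivAt_of_integrableOn_Ioi (a := w)
      (fun x _ => hasDerivAt_gaussianPDF x) integrable_neg_mul_gpdf.integrableOn
      (integrable_gaussianPDFReal 0 1).integrableOn
  have := integral_Ioi_of_hasDerivAt_of_tendsto' (fun x _ => hasDerivAt_gaussianPDF x)
    (a := w) integrable_neg_mul_gpdf.integrableOn h0
  have e : (fun t => t * gpdf t) = fun t => -(-t * gpdf t) := by ext t; ring
  rw [e, integral_neg, this]
  ring

/-- The solution of Stein's equation `φ' - wφ = h - E h` for a continuous `h` bounded by one is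
bounded together with its derivative, uniformly in `h`. -/
lemma stein_std : ∃ K : ℝ, 0 ≤ K ∧ ∀ h : ℝ → ℝ, Continuous h → (∀ x, |h x| ≤ 1) →
    ∃ φ φ' : ℝ → ℝ, Continuous φ' ∧ (∀ w, HasDerivAt φ (φ' w) w) ∧
      (∀ w, φ' w - w * φ w = h w - ∫ z, h z ∂gam) ∧ (∀ w, |φ w| ≤ K) ∧ ∀ w, |φ' w| ≤ K := by
  have hp1 := gpdf_pos 1
  refine ⟨2 / gpdf 1 + 4, by positivity, fun h hc hb => ?_⟩
  set e := ∫ z, h z ∂gam with he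
  have ihg : Integrable h gam := gam_integrable_of_bound hc (A := 1) (c := 0) (by simpa using hb)
  have heb : |e| ≤ 1 := by
    have := norm_integral_le_of_norm_le_const (μ := gam) (f := h) (C := 1)
      (Eventually.of_forall hb)
    simpa using this
  have hde : ∀ x, |h x - e| ≤ 2 := fun x => by
    have := abs_sub (h x) e
    linarith [hb x]
  set q : ℝ → ℝ := fun t => gpdf t * (h t - e) with hq
  have qc : Continuous q := gpdf_cont.mul (hc.sub continuous_const)
  have iq : Integrable q := (gam_integrable_iff _).1 (ihg.sub (integrable_const e))
  have q0 : ∫ t, q t = 0 := by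
    have h1 : ∫ t, (h t - e) ∂gam = 0 := by
      rw [integral_sub ihg (integrable_const e)]; simp [he]
    rw [gam, integral_gaussianReal_eq_integral_smul one_ne_zero] at h1
    exact h1
  have hqb : ∀ t, |q t| ≤ 2 * gpdf t := fun t => by
    rw [hq]; simp only; rw [abs_mul, abs_of_pos (gpdf_pos t)]
    nlinarith [hde t, gpdf_pos t]
  -- the solution is `φ = F / gpdf`; since `∫ q = 0`, `F` is also minus an integral over `Ioi w`
  set F : ℝ → ℝ := fun w => ∫ t in Iic w, q t with hF
  have hFd : ∀ w, HasDerivAt F (q w) w := fun w => by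
    have e1 : F = fun w => F 0 + ∫ t in (0:ℝ)..w, q t := by
      ext w
      rw [← intervalIntegral.integral_Iic_sub_Iic iq.integrableOn iq.integrableOn]
      simp [hF]
    rw [e1]
    exact (intervalIntegral.integral_hasDerivAt_right (iq.intervalIntegrable)
      (qc.stronglyMeasurableAtFilter _ _) qc.continuousAt).const_add _
  have hF' : ∀ w, F w = -∫ t in Ioi w, q t := fun w => by
    have := intervalIntegral.integral_Iic_add_Ioi (b := w) iq.integrableOn iq.integrableOn
    rw [q0] at this
    linarith
  have iw : Integrable (fun t => 2 * (-t * gpdf t)) := integrable_neg_mul_gpdf.const_mul 2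
  have iw' : Integrable (fun t => 2 * (t * gpdf t)) := by
    refine iw.neg.congr (Eventually.of_forall fun t => ?_)
    simp only [Pi.neg_apply]; ring
  -- on the half line beyond `w`, `|w| ≤ |t|` and `∫ |t| gpdf t` is explicit
  have hwF : ∀ w, |w * F w| ≤ 2 * gpdf w := fun w => by
    rcases le_total w 0 with hw | hw
    · have hFw : w * F w = ∫ t in Iic w, w * q t := (integral_const_mul w q).symm
      rw [hFw, ← gpdf_tail_Iic, ← integral_const_mul, ← Real.norm_eq_abs]
      refine (norm_integral_le_integral_norm _).trans ?_
      refine setIntegral_mono_on (iq.const_mul w).norm.integrableOn iw.integrableOn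
        measurableSet_Iic fun t ht => ?_
      rw [Real.norm_eq_abs, abs_mul, abs_of_nonpos hw]
      have := mem_Iic.1 ht
      nlinarith [mul_le_mul_of_nonneg_left (hqb t) (by linarith : 0 ≤ -w),
        mul_nonneg (by linarith : 0 ≤ w - t) (gpdf_pos t).le]
    · have hFw : w * F w = -∫ t in Ioi w, w * q t := by
        rw [hF', mul_neg, integral_const_mul]
      rw [hFw, ← gpdf_tail_Ioi, ← integral_const_mul, abs_neg, ← Real.norm_eq_abs]
      refine (norm_integral_le_integral_norm _).trans ?_
      refine setIntegral_mono_on (iq.const_mul w).norm.integrableOn iw'.integrableOn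
        measurableSet_Ioi fun t ht => ?_
      rw [Real.norm_eq_abs, abs_mul, abs_of_nonneg hw]
      have := mem_Ioi.1 ht
      nlinarith [mul_le_mul_of_nonneg_left (hqb t) hw,
        mul_nonneg (by linarith : 0 ≤ t - w) (gpdf_pos t).le]
  have hF2 : ∀ w, |F w| ≤ 2 := fun w => by
    rw [hF, ← Real.norm_eq_abs]
    refine (norm_integral_le_integral_norm _).trans ?_
    refine (setIntegral_le_integral iq.norm (Eventually.of_forall fun _ => norm_nonneg _)).trans ?_
    have := integral_mono iq.norm ((integrable_gaussianPDFReal 0 1).const_mul 2) hqb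
    rwa [integral_const_mul, integral_gaussianPDFReal_eq_one 0 one_ne_zero, mul_one] at this
  have hpm : ∀ w, |w| ≤ 1 → gpdf 1 ≤ gpdf w := fun w hw => by
    simp only [gaussianPDFReal]
    have : w ^ 2 ≤ 1 := by rw [← sq_abs]; nlinarith [abs_nonneg w]
    exact mul_le_mul_of_nonneg_left (Real.exp_le_exp.2
      (div_le_div_of_nonneg_right (by nlinarith) (by positivity))) (by positivity)
  have hwφ : ∀ w, |w * (F w / gpdf w)| ≤ 2 := fun w => by
    rw [← mul_div_assoc, abs_div, abs_of_pos (gpdf_pos w), div_le_iff₀ (gpdf_pos w)]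
    exact hwF w
  -- near the origin the density is bounded below, elsewhere `|φ| ≤ |w φ|`
  have hφb : ∀ w, |F w / gpdf w| ≤ 2 / gpdf 1 + 2 := fun w => by
    rcases le_total |w| 1 with hw | hw
    · rw [abs_div, abs_of_pos (gpdf_pos w)]
      have : |F w| / gpdf w ≤ 2 / gpdf 1 :=
        div_le_div₀ (by norm_num) (hF2 w) hp1 (hpm w hw)
      linarith
    · have h1 := hwφ w
      rw [abs_mul] at h1
      have h2 : |F w / gpdf w| ≤ 2 := by nlinarith [abs_nonneg (F w / gpdf w)]
      have : 0 ≤ 2 / gpdf 1 := by positivity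
      linarith
  have hFc : Continuous F := continuous_iff_continuousAt.2 fun w => (hFd w).continuousAt
  refine ⟨fun w => F w / gpdf w, fun w => w * (F w / gpdf w) + (h w - e), ?_, ?_, ?_, ?_, ?_⟩
  · exact (continuous_id.mul (hFc.div gpdf_cont fun w => (gpdf_pos w).ne')).add
      (hc.sub continuous_const)
  · intro w
    refine ((hFd w).div (hasDerivAt_gaussianPDF w) (gpdf_pos w).ne').congr_deriv ?_
    have := (gpdf_pos w).ne'
    simp only [hq]
    field_simp
    ring
  · intro w; ring
  · intro w; linarith [hφb w]
  · intro w
    have := abs_add_le (w * (F w / gpdf w)) (h w - e)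
    have h3 : 0 ≤ 2 / gpdf 1 := by positivity
    linarith [hwφ w, hde w]

/-- Stein's equation for the normal law `N(-τ²/2, τ²)`. -/
lemma stein_scaled {τ : ℝ} (hτ : 0 < τ) : ∃ K : ℝ, 0 ≤ K ∧ ∀ h : ℝ → ℝ, Continuous h →
    (∀ x, |h x| ≤ 1) → ∃ φ φ' : ℝ → ℝ, Continuous φ' ∧ (∀ r, HasDerivAt φ (φ' r) r) ∧
      (∀ r, τ ^ 2 * φ' r - (r + τ ^ 2 / 2) * φ r
        = h r - ∫ w, h (τ * w - τ ^ 2 / 2) ∂gam) ∧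
      (∀ r, |φ r| ≤ K) ∧ ∀ r, |φ' r| ≤ K := by
  obtain ⟨K, hK, H⟩ := stein_std
  refine ⟨K / τ + K / τ ^ 2, by positivity, fun h hc hb => ?_⟩
  obtain ⟨φ, φ', c1, d1, eq1, b1, b2⟩ := H (fun w => h (τ * w - τ ^ 2 / 2)) (by fun_prop)
    (fun _ => hb _)
  have k1 : 0 ≤ K / τ := by positivity
  have k2 : 0 ≤ K / τ ^ 2 := by positivity
  refine ⟨fun r => φ ((r + τ ^ 2 / 2) / τ) / τ, fun r => φ' ((r + τ ^ 2 / 2) / τ) / τ ^ 2,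
    by fun_prop, fun r => ?_, fun r => ?_, fun r => ?_, fun r => ?_⟩
  · have h1 : HasDerivAt (fun r : ℝ => (r + τ ^ 2 / 2) / τ) (1 / τ) r :=
      ((hasDerivAt_id r).add_const _).div_const _
    refine (((d1 _).comp r h1).div_const τ).congr_deriv ?_
    field_simp
  · have := eq1 ((r + τ ^ 2 / 2) / τ)
    have e : τ * ((r + τ ^ 2 / 2) / τ) - τ ^ 2 / 2 = r := by field_simp; ring
    simp only [e] at this
    rw [← this]
    field_simp
  · rw [abs_div, abs_of_pos hτ]
    have := div_le_div_of_nonneg_right (b1 ((r + τ ^ 2 / 2) / τ)) hτ.le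
    linarith
  · rw [abs_div, abs_of_pos (by positivity : 0 < τ ^ 2)]
    have := div_le_div_of_nonneg_right (b2 ((r + τ ^ 2 / 2) / τ)) (by positivity : 0 ≤ τ ^ 2)
    linarith

/-! ### Sums of independent coordinates -/

/-- Distinct centred coordinates are orthogonal with respect to a weight in the coordinate `i0`:
one of `i`, `j` differs from `i0`, and that factor integrates to zero. -/
lemma pi_offdiag {d : ℕ} {μ : Measure ℝ} [IsProbabilityMeasure μ] (i0 : Fin d) (w : ℝ → ℝ)
    (η : Fin d → ℝ → ℝ) (hη : ∀ j, ∫ t, η j t ∂μ = 0) {i j : Fin d} (hij : i ≠ j) :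
    ∫ x : Fin d → ℝ, w (x i0) * (η i (x i) * η j (x j)) ∂(Measure.pi fun _ => μ) = 0 := by
  wlog hj : j ≠ i0 generalizing i j
  · push Not at hj
    have := this hij.symm (by rw [← hj]; exact hij)
    simpa only [mul_comm (η j _)] using this
  have e : ∀ x : Fin d → ℝ, w (x i0) * (η i (x i) * η j (x j)) =
      ∏ k, ((if k = i0 then w (x k) else 1) * ((if k = i then η i (x k) else 1) *
        (if k = j then η j (x k) else 1))) := fun x => by
    simp only [Finset.prod_mul_distrib, Finset.prod_ite_eq', Finset.mem_univ, if_true]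
  simp_rw [e]
  rw [integral_fintype_prod_eq_prod (fun k (t : ℝ) => (if k = i0 then w t else 1) *
    ((if k = i then η i t else 1) * (if k = j then η j t else 1)))]
  refine Finset.prod_eq_zero (Finset.mem_univ j) ?_
  simp [hj, hij.symm, hη]

/-- Orthogonality of centred coordinates: a weighted second moment of a sum of independent centred
variables reduces to its diagonal, even if the weight depends on one of the coordinates. -/
lemma pi_sq {d : ℕ} {μ : Measure ℝ} [IsProbabilityMeasure μ] (i0 : Fin d) (w : ℝ → ℝ)
    (η : Fin d → ℝ → ℝ) (hη : ∀ j, ∫ t, η j t ∂μ = 0)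
    (hi : ∀ i j, Integrable (fun x : Fin d → ℝ => w (x i0) * (η i (x i) * η j (x j)))
      (Measure.pi fun _ => μ)) :
    Integrable (fun x : Fin d → ℝ => w (x i0) * (∑ i, η i (x i)) ^ 2) (Measure.pi fun _ => μ) ∧
    ∫ x : Fin d → ℝ, w (x i0) * (∑ i, η i (x i)) ^ 2 ∂(Measure.pi fun _ => μ) =
      ∑ i, ∫ x : Fin d → ℝ, w (x i0) * (η i (x i) * η i (x i)) ∂(Measure.pi fun _ => μ) := by
  have e : ∀ x : Fin d → ℝ, w (x i0) * (∑ i, η i (x i)) ^ 2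
      = ∑ i, ∑ j, w (x i0) * (η i (x i) * η j (x j)) := fun x => by
    rw [sq, Finset.sum_mul_sum, Finset.mul_sum]
    simp_rw [Finset.mul_sum]
  simp_rw [e]
  refine ⟨integrable_finsetSum _ fun i _ => integrable_finsetSum _ fun j _ => hi i j, ?_⟩
  rw [integral_finsetSum _ fun i _ => integrable_finsetSum _ fun j _ => hi i j]
  refine Finset.sum_congr rfl fun i _ => ?_
  rw [integral_finsetSum _ fun j _ => hi i j]
  refine Finset.sum_eq_single i (fun j _ hj => ?_) (by simp)
  exact pi_offdiag i0 w η hη hj.symm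

lemma abs_integral_le_sqrt {Ω : Type*} [MeasurableSpace Ω] {μ : Measure Ω} [IsProbabilityMeasure μ]
    {T : Ω → ℝ} (h1 : Integrable T μ) (h2 : Integrable (fun x => T x ^ 2) μ) :
    ∫ x, |T x| ∂μ ≤ √(∫ x, T x ^ 2 ∂μ) := by
  apply Real.le_sqrt_of_sq_le
  set m := ∫ x, |T x| ∂μ
  have h0 : 0 ≤ ∫ x, (|T x| - m) ^ 2 ∂μ := integral_nonneg fun _ => sq_nonneg _
  have e : ∀ x, (|T x| - m) ^ 2 = T x ^ 2 - 2 * m * |T x| + m ^ 2 := fun x => by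
    rw [sub_sq, sq_abs]; ring
  simp_rw [e] at h0
  have i1 : Integrable (fun x => T x ^ 2 - 2 * m * |T x|) μ := h2.sub (h1.abs.const_mul _)
  rw [integral_add i1 (integrable_const _), integral_sub h2 (h1.abs.const_mul _), integral_const_mul, integral_const] at h0
  simp only [probReal_univ, one_smul] at h0
  nlinarith

lemma gam_integral_sq_sub_one : ∫ z, (z ^ 2 - 1) ∂gam = 0 := by
  have hk : ∀ z : ℝ, |z| ≤ Real.exp |z| := fun z =>
    (by linarith : |z| ≤ |z| + 1).trans (Real.add_one_le_exp _)
  have := gam_ibp (g := fun z => z) (g' := fun _ => 1) (fun z => hasDerivAt_id z)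
    (gam_integrable_of_bound (by fun_prop) (A := 1) (c := 1) fun z => by simpa using hk z)
    (gam_integrable_of_bound (by fun_prop) (A := 1) (c := 2) fun z => by
      rw [abs_mul, one_mul, two_mul, Real.exp_add]
      exact mul_le_mul (hk z) (hk z) (abs_nonneg _) (Real.exp_pos _).le)
    (integrable_const _)
  simpa [sq] using this

/-! ### The log-acceptance ratio -/

/-- The logarithm of `∏ ρ(Y_i) / ∏ ρ(x_i)` for `Y = x + s z`, with `L = log ρ`. -/
def Sx {d : ℕ} (L : ℝ → ℝ) (s : ℝ) (x z : Fin d → ℝ) : ℝ := ∑ i, (L (x i + s * z i) - L (x i))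

/-- Bound for the Gaussian approximation error of `Sx L s x`, conditionally on `x`. The first two
terms are centred sums in `x`, the third one is the conditional standard deviation of the quadratic
part, and the last one collects the Taylor remainders. -/
def Dx {d : ℕ} (L1 L2 : ℝ → ℝ) (J s C' : ℝ) (x : Fin d → ℝ) : ℝ :=
  s ^ 2 * |∑ i, (L1 (x i) ^ 2 - J)| + s ^ 2 * |∑ i, (L2 (x i) + J)|
    + s ^ 2 * √(C' * ∑ i, L2 (x i) ^ 2) + s ^ 3 * C' * ∑ i, Real.exp (2 * |x i|)

lemma abs_le_exp_abs (z : ℝ) : |z| ≤ Real.exp |z| :=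
  (by linarith : |z| ≤ |z| + 1).trans (Real.add_one_le_exp _)

lemma pow_le_exp_abs (k : ℕ) (z : ℝ) : |z| ^ k ≤ Real.exp (k * |z|) := by
  rw [Real.exp_nat_mul]
  exact pow_le_pow_left₀ (abs_nonneg z) (abs_le_exp_abs z) k

/-- Polynomial factors up to degree three are absorbed in the exponential. -/
lemma pow_mul_exp_le {k : ℕ} (hk : k ≤ 3) {s l : ℝ} (hsl : s ≤ l) (z : ℝ) :
    |z| ^ k * Real.exp (s * |z|) ≤ Real.exp ((l + 3) * |z|) := by
  refine (mul_le_mul_of_nonneg_right (pow_le_exp_abs k z) (Real.exp_pos _).le).trans ?_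
  rw [← Real.exp_add]
  apply Real.exp_le_exp.2
  have : (k:ℝ) ≤ 3 := by exact_mod_cast hk
  nlinarith [abs_nonneg z]

section core
variable {L L1 L2 L3 : ℝ → ℝ} {C : ℝ}

lemma Sx_cont (HL : ExpC3 L L1 L2 L3 C) {d : ℕ} (s : ℝ) (x : Fin d → ℝ) :
    Continuous (Sx L s x) := by
  have := HL.cont
  unfold Sx
  fun_prop

lemma Sx_deriv (HL : ExpC3 L L1 L2 L3 C) {d : ℕ} (s : ℝ) (x z : Fin d → ℝ) (i : Fin d) (t : ℝ) :
    HasDerivAt (fun t => Sx L s x (Function.update z i t)) (s * L1 (x i + s * t)) t := by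
  unfold Sx
  have h : ∀ j ∈ Finset.univ, HasDerivAt
      (fun t => L (x j + s * Function.update z i t j) - L (x j))
      (if j = i then s * L1 (x i + s * t) else 0) t := fun j _ => by
    by_cases hj : j = i
    · subst hj
      simp only [Function.update_self, if_true]
      have h1 : HasDerivAt (fun t => x j + s * t) s t := by
        simpa using ((hasDerivAt_id t).const_mul s).const_add (x j)
      refine (((HL.hd1 _).comp t h1).sub_const _).congr_deriv (by ring)
    · simp only [Function.update_of_ne hj, if_neg hj]
      exact hasDerivAt_const _ _
  refine (HasDerivAt.fun_sum h).congr_deriv ?_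
  simp

lemma L1_growth (HL : ExpC3 L L1 L2 L3 C) {s : ℝ} (hs : 0 ≤ s) (a z : ℝ) :
    |L1 (a + s * z)| ≤ C * Real.exp |a| * Real.exp (s * |z|) := by
  refine (HL.b1 _).trans ?_
  rw [mul_assoc, ← Real.exp_add]
  refine mul_le_mul_of_nonneg_left (Real.exp_le_exp.2 ?_) HL.nonneg
  refine (abs_add_le _ _).trans ?_
  rw [abs_mul, abs_of_nonneg hs]

/-- Gaussian integration by parts for a function of `Sx`. -/
lemma ibp1 (HL : ExpC3 L L1 L2 L3 C) {d : ℕ} {s : ℝ} (hs : 0 ≤ s) (x : Fin d → ℝ) (i : Fin d)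
    {u u' : ℝ → ℝ} (hu : ∀ r, HasDerivAt u (u' r) r) (hu' : Continuous u') {A : ℝ}
    (b : ∀ r, |u r| ≤ A) (b' : ∀ r, |u' r| ≤ A) :
    ∫ z, z i * u (Sx L s x z) ∂(gamPi d) =
      ∫ z, s * L1 (x i + s * z i) * u' (Sx L s x z) ∂(gamPi d) := by
  have hA : 0 ≤ A := (abs_nonneg _).trans (b 0)
  have hC := HL.nonneg
  have hS := Sx_cont HL s x
  have hL1 := HL.cont1
  have huc : Continuous u := continuous_iff_continuousAt.2 fun r => (hu r).continuousAt
  refine gamPi_ibp i (by fun_prop) (by fun_prop) (fun z t => ?_)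
    (A := A + s * (C * Real.exp |x i|) * A) (c := s) (fun z => ?_) (fun z => ?_)
  · refine ((hu _).comp t (Sx_deriv HL s x z i t)).congr_deriv ?_
    simp only [Function.update_self]
    ring
  · have h1 : 1 ≤ Real.exp (s * |z i|) := Real.one_le_exp (by positivity)
    have h2 : 0 ≤ s * (C * Real.exp |x i|) * A := by positivity
    nlinarith [b (Sx L s x z)]
  · rw [abs_mul, abs_mul, abs_of_nonneg hs]
    have h1 := L1_growth HL hs (x i) (z i)
    calc s * |L1 (x i + s * z i)| * |u' (Sx L s x z)|
        ≤ s * (C * Real.exp |x i| * Real.exp (s * |z i|)) * A := by gcongr; exact b' _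
      _ ≤ A * Real.exp (s * |z i|) + s * (C * Real.exp |x i| * Real.exp (s * |z i|)) * A := by
        have : 0 ≤ A * Real.exp (s * |z i|) := by positivity
        linarith
      _ = _ := by ring

/-- Integration by parts removing one of two factors `z i`; the second factor is then of order `s`
up to the term `u (Sx L s x z)`. -/
lemma ibp2 (HL : ExpC3 L L1 L2 L3 C) {d : ℕ} {s : ℝ} (hs : 0 ≤ s) (x : Fin d → ℝ) (i : Fin d)
    {u u' : ℝ → ℝ} (hu : ∀ r, HasDerivAt u (u' r) r) (hu' : Continuous u') {A : ℝ}
    (b : ∀ r, |u r| ≤ A) (b' : ∀ r, |u' r| ≤ A) :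
    ∫ z, z i * (z i * u (Sx L s x z)) ∂(gamPi d) =
      ∫ z, (u (Sx L s x z) + z i * (s * L1 (x i + s * z i) * u' (Sx L s x z))) ∂(gamPi d) := by
  have hA : 0 ≤ A := (abs_nonneg _).trans (b 0)
  have hC := HL.nonneg
  have hS := Sx_cont HL s x
  have hL1 := HL.cont1
  have huc : Continuous u := continuous_iff_continuousAt.2 fun r => (hu r).continuousAt
  refine gamPi_ibp i (g' := fun z => u (Sx L s x z) + z i * (s * L1 (x i + s * z i) *
    u' (Sx L s x z))) (by fun_prop) (by fun_prop) (fun z t => ?_)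
    (A := A + s * (C * Real.exp |x i|) * A) (c := s + 3) (fun z => ?_) (fun z => ?_)
  · have h1 : HasDerivAt (fun t => Function.update z i t i) 1 t := by
      simp only [Function.update_self]
      exact hasDerivAt_id' t
    refine (h1.mul ((hu _).comp t (Sx_deriv HL s x z i t))).congr_deriv ?_
    simp only [Function.update_self, Function.comp]
    ring
  · have h1 : |z i| ≤ Real.exp ((s + 3) * |z i|) := by
      refine (abs_le_exp_abs _).trans (Real.exp_le_exp.2 ?_)
      nlinarith [abs_nonneg (z i)]
    have h2 : 0 ≤ s * (C * Real.exp |x i|) * A := by positivity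
    rw [abs_mul]
    calc |z i| * |u (Sx L s x z)| ≤ Real.exp ((s + 3) * |z i|) * A := by gcongr; exact b _
      _ ≤ _ := by nlinarith [Real.exp_pos ((s + 3) * |z i|)]
  · have h1 := L1_growth HL hs (x i) (z i)
    have h2 := pow_mul_exp_le (k := 1) (by norm_num) (le_refl s) (z i)
    rw [pow_one] at h2
    have h3 : 1 ≤ Real.exp ((s + 3) * |z i|) := Real.one_le_exp (by positivity)
    refine (abs_add_le _ _).trans ?_
    rw [abs_mul, abs_mul, abs_mul, abs_of_nonneg hs]
    calc |u (Sx L s x z)| + |z i| * (s * |L1 (x i + s * z i)| * |u' (Sx L s x z)|)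
        ≤ A + |z i| * (s * (C * Real.exp |x i| * Real.exp (s * |z i|)) * A) := by
          gcongr
          · exact b _
          · exact b' _
      _ = A * 1 + s * (C * Real.exp |x i|) * A * (|z i| * Real.exp (s * |z i|)) := by ring
      _ ≤ A * Real.exp ((s + 3) * |z i|)
          + s * (C * Real.exp |x i|) * A * Real.exp ((s + 3) * |z i|) := by gcongr
      _ = _ := by ring

end core

/-! ### Gaussian approximation of the log-acceptance ratio -/

section core
variable {L L1 L2 L3 : ℝ → ℝ} {C : ℝ}

lemma int1 (HL : ExpC3 L L1 L2 L3 C) {d : ℕ} (s : ℝ) (x : Fin d → ℝ) (i : Fin d)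
    {u : ℝ → ℝ} (hu : Continuous u) {A : ℝ} (b : ∀ r, |u r| ≤ A) :
    Integrable (fun z => z i * u (Sx L s x z)) (gamPi d) := by
  have hS := Sx_cont HL s x
  refine gamPi_integrable_of_bound (by fun_prop) i (A := A) (c := 1) fun z => ?_
  rw [abs_mul, mul_comm, one_mul]
  exact mul_le_mul (b _) (abs_le_exp_abs _) (abs_nonneg _) ((abs_nonneg _).trans (b 0))

lemma int2 (HL : ExpC3 L L1 L2 L3 C) {d : ℕ} {s : ℝ} (hs : 0 ≤ s) (x : Fin d → ℝ) (i : Fin d)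
    {u : ℝ → ℝ} (hu : Continuous u) {A : ℝ} (b : ∀ r, |u r| ≤ A) :
    Integrable (fun z => s * L1 (x i + s * z i) * u (Sx L s x z)) (gamPi d) := by
  have hS := Sx_cont HL s x
  have hL1 := HL.cont1
  have hA : 0 ≤ A := (abs_nonneg _).trans (b 0)
  have hC := HL.nonneg
  refine gamPi_integrable_of_bound (by fun_prop) i (A := s * (C * Real.exp |x i|) * A) (c := s)
    fun z => ?_
  rw [abs_mul, abs_mul, abs_of_nonneg hs]
  have h1 := L1_growth HL hs (x i) (z i)
  calc s * |L1 (x i + s * z i)| * |u (Sx L s x z)|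
        ≤ s * (C * Real.exp |x i| * Real.exp (s * |z i|)) * A := by gcongr; exact b _
    _ = _ := by ring

lemma gam_int_sq : Integrable (fun z : ℝ => (z ^ 2 - 1) ^ 2) gam := by
  refine gam_integrable_of_bound (by fun_prop) (A := 4) (c := 4) fun z => ?_
  have h1 := pow_le_exp_abs 4 z
  rw [Even.pow_abs (by decide)] at h1
  have h2 : 1 ≤ Real.exp (4 * |z|) := Real.one_le_exp (by positivity)
  push_cast at h1
  rw [abs_of_nonneg (sq_nonneg _)]
  nlinarith [sq_nonneg (z ^ 2), sq_nonneg z]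

/-- The second moment of the quadratic chaos `∑ aᵢ (zᵢ² - 1)`. -/
lemma chaos_sq {d : ℕ} (a : Fin d → ℝ) :
    Integrable (fun z : Fin d → ℝ => ∑ i, a i * (z i ^ 2 - 1)) (gamPi d) ∧
    Integrable (fun z : Fin d → ℝ => (∑ i, a i * (z i ^ 2 - 1)) ^ 2) (gamPi d) ∧
    ∫ z : Fin d → ℝ, (∑ i, a i * (z i ^ 2 - 1)) ^ 2 ∂(gamPi d) =
      (∫ z, (z ^ 2 - 1) ^ 2 ∂gam) * ∑ i, a i ^ 2 := by
  have hsq : ∀ z : ℝ, |z ^ 2 - 1| ≤ Real.exp (2 * |z|) := fun z => by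
    have h1 := pow_le_exp_abs 2 z
    have h2 : 1 ≤ Real.exp (2 * |z|) := Real.one_le_exp (by positivity)
    push_cast at h1
    rw [sq_abs] at h1
    rw [abs_le]
    constructor <;> nlinarith [sq_nonneg z]
  have i1 : Integrable (fun z : Fin d → ℝ => ∑ i, a i * (z i ^ 2 - 1)) (gamPi d) :=
    integrable_finsetSum _ fun i _ =>
      gamPi_integrable_of_bound (by fun_prop) i (A := |a i|) (c := 2) fun z => by
        rw [abs_mul]
        exact mul_le_mul_of_nonneg_left (hsq _) (abs_nonneg _)
  rcases Nat.eq_zero_or_pos d with rfl | hd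
  · simp
  have hi : ∀ i j, Integrable (fun z : Fin d → ℝ => (1:ℝ) *
      ((a i * (z i ^ 2 - 1)) * (a j * (z j ^ 2 - 1)))) (gamPi d) := fun i j => by
    refine (((gamPi_integrable_exp 4 i).const_mul (|a i| * |a j|)).add
      ((gamPi_integrable_exp 4 j).const_mul (|a i| * |a j|))).mono'
      (by fun_prop : Continuous _).aestronglyMeasurable (Eventually.of_forall fun z => ?_)
    have e4 : ∀ t : ℝ, Real.exp (4 * |t|) = Real.exp (2 * |t|) ^ 2 := fun t => by
      rw [← Real.exp_nat_mul]; push_cast; ring_nf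
    simp only [Pi.add_apply, Real.norm_eq_abs, one_mul, abs_mul, e4]
    have h1 := mul_le_mul (hsq (z i)) (hsq (z j)) (abs_nonneg _) (Real.exp_pos _).le
    have h2 : Real.exp (2 * |z i|) * Real.exp (2 * |z j|) ≤
      Real.exp (2 * |z i|) ^ 2 + Real.exp (2 * |z j|) ^ 2 := by
      nlinarith [sq_nonneg (Real.exp (2 * |z i|) - Real.exp (2 * |z j|)),
        sq_nonneg (Real.exp (2 * |z i|)), sq_nonneg (Real.exp (2 * |z j|))]
    calc _ = |a i| * |a j| * (|z i ^ 2 - 1| * |z j ^ 2 - 1|) := by ring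
      _ ≤ |a i| * |a j| * (Real.exp (2 * |z i|) ^ 2 + Real.exp (2 * |z j|) ^ 2) := by
        gcongr; exact h1.trans h2
      _ = _ := by ring
  have := pi_sq (μ := gam) (⟨0, hd⟩ : Fin d) (fun _ => 1) (fun i t => a i * (t ^ 2 - 1))
    (fun j => by rw [integral_const_mul, gam_integral_sq_sub_one, mul_zero]) hi
  simp only [one_mul] at this
  refine ⟨i1, this.1, this.2.trans ?_⟩
  rw [Finset.mul_sum]
  refine Finset.sum_congr rfl fun i _ => ?_
  rw [← integral_comp_eval (μ := fun _ : Fin d => gam) (i := i)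
    (f := fun t : ℝ => (t ^ 2 - 1) ^ 2) gam_int_sq.aestronglyMeasurable, ← integral_mul_const]
  refine integral_congr_ae (Eventually.of_forall fun z => ?_)
  simp only
  ring

/-- The constant in `Dx`. -/
def cD (C l : ℝ) : ℝ := 1 + (∫ z, (z ^ 2 - 1) ^ 2 ∂gam) + (C ^ 2 + C) * gK (l + 3)

lemma cD_facts {C : ℝ} (hC : 0 ≤ C) (l : ℝ) : 1 ≤ cD C l ∧
    (∫ z, (z ^ 2 - 1) ^ 2 ∂gam) ≤ cD C l ∧ (C ^ 2 + C) * gK (l + 3) ≤ cD C l := by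
  have h1 : 0 ≤ ∫ z, (z ^ 2 - 1) ^ 2 ∂gam := integral_nonneg fun _ => sq_nonneg _
  have h2 : 0 ≤ (C ^ 2 + C) * gK (l + 3) := mul_nonneg (by positivity) (gK_nonneg _)
  unfold cD
  exact ⟨by linarith, by linarith, by linarith⟩

/-- Comparison of the law of `Sx L s x` under the proposal with `N(-l²J/2, l²J)`: the Stein solution
is inserted and the leading linear part of `Sx` is removed by Gaussian integration by parts. -/
lemma stein_cmp (HL : ExpC3 L L1 L2 L3 C) {d : ℕ} {s l J K e : ℝ} (hs : 0 ≤ s) (hsl : s ≤ l)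
    (hd : s ^ 2 * d = l ^ 2) (x : Fin d → ℝ) {h φ φ' : ℝ → ℝ} (hc : Continuous h)
    (hb : ∀ r, |h r| ≤ 1) (hφ' : Continuous φ') (hφ : ∀ r, HasDerivAt φ (φ' r) r)
    (heq : ∀ r, l ^ 2 * J * φ' r - (r + l ^ 2 * J / 2) * φ r = h r - e)
    (b : ∀ r, |φ r| ≤ K) (b' : ∀ r, |φ' r| ≤ K) :
    |∫ z, h (Sx L s x z) ∂(gamPi d) - e| ≤ K * Dx L1 L2 J s (cD C l) x := by
  have hC := HL.nonneg
  have hK : 0 ≤ K := (abs_nonneg _).trans (b 0)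
  have hS := Sx_cont HL s x
  have hL1 := HL.cont1
  have hφc : Continuous φ := continuous_iff_continuousAt.2 fun r => (hφ r).continuousAt
  -- `P` is the mean-zero term that integration by parts attaches to the linear part of `Sx`
  set P : (Fin d → ℝ) → ℝ := fun z => ∑ i, s * L1 (x i) *
    (s * L1 (x i + s * z i) * φ' (Sx L s x z) - z i * φ (Sx L s x z)) with hP
  have iP' : ∀ i, Integrable (fun z => s * L1 (x i) *
    (s * L1 (x i + s * z i) * φ' (Sx L s x z) - z i * φ (Sx L s x z))) (gamPi d) := fun i =>
    ((int2 HL hs x i hφ' b').sub (int1 HL s x i hφc b)).const_mul _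
  have iP : Integrable P (gamPi d) := integrable_finsetSum _ fun i _ => iP' i
  have P0 : ∫ z, P z ∂(gamPi d) = 0 := by
    rw [hP, integral_finsetSum _ fun i _ => iP' i]
    refine Finset.sum_eq_zero fun i _ => ?_
    rw [integral_const_mul, integral_sub (int2 HL hs x i hφ' b') (int1 HL s x i hφc b),
      ibp1 HL hs x i hφ hφ' b b', sub_self, mul_zero]
  have ih : Integrable (fun z => h (Sx L s x z)) (gamPi d) :=
    Integrable.of_bound (by fun_prop : Continuous _).aestronglyMeasurable 1
      (Eventually.of_forall fun z => hb _)
  -- `G` dominates the Stein residual and has Gaussian mean at most `Dx`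
  set G : (Fin d → ℝ) → ℝ := fun z => s ^ 2 * |∑ i, (L1 (x i) ^ 2 - J)|
    + s ^ 2 * |∑ i, (L2 (x i) + J)| + s ^ 2 * |∑ i, L2 (x i) * (z i ^ 2 - 1)|
    + ∑ i, s ^ 3 * (C ^ 2 + C) * Real.exp (2 * |x i|) * Real.exp ((l + 3) * |z i|) with hG
  obtain ⟨j1, j2, j3⟩ := chaos_sq (fun i => L2 (x i))
  have iE : ∀ i : Fin d, Integrable (fun z : Fin d → ℝ => s ^ 3 * (C ^ 2 + C) *
      Real.exp (2 * |x i|) * Real.exp ((l + 3) * |z i|)) (gamPi d) := fun i =>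
    (gamPi_integrable_exp (l + 3) i).const_mul _
  have ia : Integrable (fun z : Fin d → ℝ => s ^ 2 * |∑ i, (L1 (x i) ^ 2 - J)|
      + s ^ 2 * |∑ i, (L2 (x i) + J)| + s ^ 2 * |∑ i, L2 (x i) * (z i ^ 2 - 1)|) (gamPi d) :=
    (integrable_const _).add (j1.abs.const_mul _)
  have ib : Integrable (fun z : Fin d → ℝ => ∑ i, s ^ 3 * (C ^ 2 + C) * Real.exp (2 * |x i|) *
      Real.exp ((l + 3) * |z i|)) (gamPi d) := integrable_finsetSum _ fun i _ => iE i
  have iG : Integrable G (gamPi d) := ia.add ib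
  obtain ⟨c1, c2, c3⟩ := cD_facts hC l
  have G_le : ∫ z, G z ∂(gamPi d) ≤ Dx L1 L2 J s (cD C l) x := by
    rw [hG, integral_add ia ib, integral_add (integrable_const _) (j1.abs.const_mul _),
      integral_const, integral_const_mul, integral_finsetSum _ fun i _ => iE i]
    simp only [probReal_univ, one_smul, integral_const_mul, gamPi_integral_exp]
    unfold Dx
    have t1 : ∫ z : Fin d → ℝ, |∑ i, L2 (x i) * (z i ^ 2 - 1)| ∂(gamPi d)
        ≤ √(cD C l * ∑ i, L2 (x i) ^ 2) := by
      refine (abs_integral_le_sqrt j1 j2).trans (Real.sqrt_le_sqrt ?_)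
      rw [j3]
      exact mul_le_mul_of_nonneg_right c2 (Finset.sum_nonneg fun _ _ => sq_nonneg _)
    have t2 : ∑ i, s ^ 3 * (C ^ 2 + C) * Real.exp (2 * |x i|) * gK (l + 3)
        ≤ s ^ 3 * cD C l * ∑ i, Real.exp (2 * |x i|) := by
      rw [Finset.mul_sum]
      refine Finset.sum_le_sum fun i _ => ?_
      calc _ = s ^ 3 * ((C ^ 2 + C) * gK (l + 3)) * Real.exp (2 * |x i|) := by ring
        _ ≤ _ := by gcongr
    have := mul_le_mul_of_nonneg_left t1 (sq_nonneg s)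
    linarith
  have ptw : ∀ z, |h (Sx L s x z) - e - P z| ≤ K * G z := fun z => by
    rw [← heq]
    have hJ : l ^ 2 * J = ∑ i : Fin d, s ^ 2 * J := by
      rw [Finset.sum_const, Finset.card_univ, Fintype.card_fin, nsmul_eq_mul, ← hd]; ring
    have eP : P z = (∑ i, s ^ 2 * (L1 (x i) * L1 (x i + s * z i))) * φ' (Sx L s x z)
        - (∑ i, s * L1 (x i) * z i) * φ (Sx L s x z) := by
      rw [hP, Finset.sum_mul, Finset.sum_mul, ← Finset.sum_sub_distrib]
      exact Finset.sum_congr rfl fun i _ => by ring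
    have e1 : l ^ 2 * J * φ' (Sx L s x z) - (Sx L s x z + l ^ 2 * J / 2) * φ (Sx L s x z) - P z
      = (l ^ 2 * J - ∑ i, s ^ 2 * (L1 (x i) * L1 (x i + s * z i))) * φ' (Sx L s x z)
        - (Sx L s x z + l ^ 2 * J / 2 - ∑ i, s * L1 (x i) * z i) * φ (Sx L s x z) := by
      rw [eP]; ring
    -- the coefficient of the derivative of `φ`: a centred sum in `x` and a Taylor remainder
    have q1 : |l ^ 2 * J - ∑ i, s ^ 2 * (L1 (x i) * L1 (x i + s * z i))| ≤
        s ^ 2 * |∑ i, (L1 (x i) ^ 2 - J)|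
        + ∑ i, s ^ 3 * C ^ 2 * Real.exp (2 * |x i|) * Real.exp ((l + 3) * |z i|) := by
      have : l ^ 2 * J - ∑ i, s ^ 2 * (L1 (x i) * L1 (x i + s * z i))
          = -(s ^ 2 * ∑ i, (L1 (x i) ^ 2 - J))
            - ∑ i, s ^ 2 * L1 (x i) * (L1 (x i + s * z i) - L1 (x i)) := by
        rw [hJ, Finset.mul_sum, ← Finset.sum_neg_distrib, ← Finset.sum_sub_distrib,
          ← Finset.sum_sub_distrib]
        exact Finset.sum_congr rfl fun i _ => by ring
      rw [this]
      refine (abs_sub _ _).trans ?_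
      rw [abs_neg, abs_mul, abs_of_nonneg (sq_nonneg s)]
      gcongr
      refine (Finset.abs_sum_le_sum_abs _ _).trans (Finset.sum_le_sum fun i _ => ?_)
      rw [abs_mul, abs_mul, abs_of_nonneg (sq_nonneg s)]
      have a1 := HL.b1 (x i)
      have a2 := HL.taylor1' (x i) (s * z i)
      rw [abs_mul, abs_of_nonneg hs, Real.exp_add] at a2
      have a3 := pow_mul_exp_le (k := 1) (by norm_num) hsl (z i)
      rw [pow_one] at a3
      calc _ ≤ s ^ 2 * (C * Real.exp |x i|) *
            (C * (s * |z i|) * (Real.exp |x i| * Real.exp (s * |z i|))) := by gcongr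
        _ = s ^ 3 * C ^ 2 * (Real.exp |x i| * Real.exp |x i|) * (|z i| * Real.exp (s * |z i|)) := by
          ring
        _ ≤ s ^ 3 * C ^ 2 * (Real.exp |x i| * Real.exp |x i|) * Real.exp ((l + 3) * |z i|) := by
          gcongr
        _ = _ := by rw [← Real.exp_add]; ring_nf
    -- the coefficient of `φ`: `z² = 1 + (z² - 1)` splits the quadratic part of `Sx`
    have q2 : |Sx L s x z + l ^ 2 * J / 2 - ∑ i, s * L1 (x i) * z i| ≤
        s ^ 2 * |∑ i, (L2 (x i) + J)| + s ^ 2 * |∑ i, L2 (x i) * (z i ^ 2 - 1)|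
        + ∑ i, s ^ 3 * C * Real.exp (2 * |x i|) * Real.exp ((l + 3) * |z i|) := by
      have : Sx L s x z + l ^ 2 * J / 2 - ∑ i, s * L1 (x i) * z i
          = s ^ 2 / 2 * ∑ i, (L2 (x i) + J) + s ^ 2 / 2 * ∑ i, L2 (x i) * (z i ^ 2 - 1)
          + ∑ i, (L (x i + s * z i) - L (x i) - L1 (x i) * (s * z i)
              - L2 (x i) * (s * z i) ^ 2 / 2) := by
        rw [hJ, Finset.sum_div, Finset.mul_sum, Finset.mul_sum, Sx, ← Finset.sum_add_distrib,
          ← Finset.sum_sub_distrib, ← Finset.sum_add_distrib, ← Finset.sum_add_distrib]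
        exact Finset.sum_congr rfl fun i _ => by ring
      rw [this]
      have hs2 : |s ^ 2 / 2| ≤ s ^ 2 := by
        rw [abs_of_nonneg (by positivity)]; linarith [sq_nonneg s]
      refine (abs_add_three _ _ _).trans ?_
      rw [abs_mul, abs_mul]
      gcongr
      refine (Finset.abs_sum_le_sum_abs _ _).trans (Finset.sum_le_sum fun i _ => ?_)
      have a2 := HL.taylor3 (x i) (s * z i)
      rw [abs_mul s, abs_of_nonneg hs, Real.exp_add] at a2
      have a3 := pow_mul_exp_le (k := 3) le_rfl hsl (z i)
      have a4 : Real.exp |x i| ≤ Real.exp (2 * |x i|) :=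
        Real.exp_le_exp.2 (by linarith [abs_nonneg (x i)])
      calc _ ≤ C * (s * |z i|) ^ 3 * (Real.exp |x i| * Real.exp (s * |z i|)) := a2
        _ = s ^ 3 * C * Real.exp |x i| * (|z i| ^ 3 * Real.exp (s * |z i|)) := by ring
        _ ≤ _ := by gcongr
    have e2 : G z = (s ^ 2 * |∑ i, (L1 (x i) ^ 2 - J)|
        + ∑ i, s ^ 3 * C ^ 2 * Real.exp (2 * |x i|) * Real.exp ((l + 3) * |z i|))
        + (s ^ 2 * |∑ i, (L2 (x i) + J)| + s ^ 2 * |∑ i, L2 (x i) * (z i ^ 2 - 1)|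
        + ∑ i, s ^ 3 * C * Real.exp (2 * |x i|) * Real.exp ((l + 3) * |z i|)) := by
      have : ∑ i, s ^ 3 * (C ^ 2 + C) * Real.exp (2 * |x i|) * Real.exp ((l + 3) * |z i|)
          = ∑ i, s ^ 3 * C ^ 2 * Real.exp (2 * |x i|) * Real.exp ((l + 3) * |z i|)
          + ∑ i, s ^ 3 * C * Real.exp (2 * |x i|) * Real.exp ((l + 3) * |z i|) := by
        rw [← Finset.sum_add_distrib]
        exact Finset.sum_congr rfl fun i _ => by ring
      rw [hG]; simp only; rw [this]; ring
    rw [e1, e2]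
    refine (abs_sub _ _).trans ?_
    rw [abs_mul, abs_mul, mul_comm K, add_mul]
    gcongr
    · exact b' _
    · exact b _
  have fin : ∫ z, h (Sx L s x z) ∂(gamPi d) - e = ∫ z, (h (Sx L s x z) - e - P z) ∂(gamPi d) := by
    have i0 : Integrable (fun z => h (Sx L s x z) - e) (gamPi d) := ih.sub (integrable_const e)
    rw [integral_sub i0 iP, integral_sub ih (integrable_const e), P0]
    simp
  rw [fin, ← Real.norm_eq_abs]
  refine (norm_integral_le_of_norm_le (iG.const_mul K) (Eventually.of_forall ptw)).trans ?_
  rw [integral_const_mul]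
  exact mul_le_mul_of_nonneg_left G_le hK

end core

/-! ### The generator estimate for smooth acceptance functions -/

section gen
variable {L L1 L2 L3 : ℝ → ℝ} {C : ℝ} {f f1 f2 f3 : ℝ → ℝ} {N : ℝ}

/-- The generator estimate for a smooth acceptance function `m` in place of `min 1 (exp ·)`.
The increment of `f` is Taylor expanded, the factors `z` and `z²` are removed by Gaussian
integration by parts, and the remaining expectations of `m` and `m'` are compared with those
under `N(-l²J/2, l²J)`. -/
lemma gen_smooth (HL : ExpC3 L L1 L2 L3 C) (Hf : ExpC3 f f1 f2 f3 N) {d : ℕ} {s l K D e e' : ℝ}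
    (hs : 0 ≤ s) (hsl : s ≤ l)
    (hd : s ^ 2 * d = l ^ 2) (x : Fin d → ℝ) (i : Fin d) {m m' : ℝ → ℝ}
    (hm : ∀ r, HasDerivAt m (m' r) r) (hm' : Continuous m')
    (b : ∀ r, |m r| ≤ 1) (b' : ∀ r, |m' r| ≤ 1)
    (he : |∫ z, m (Sx L s x z) ∂(gamPi d) - e| ≤ K * D)
    (he' : |∫ z, m' (Sx L s x z) ∂(gamPi d) - e'| ≤ K * D) :
    |d * ∫ z, (f (x i + s * z i) - f (x i)) * m (Sx L s x z) ∂(gamPi d)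
      - (l ^ 2 / 2 * f2 (x i) * e + l ^ 2 * f1 (x i) * L1 (x i) * e')| ≤
      N * Real.exp (2 * |x i|) *
        (s * l ^ 2 * gK (l + 3) * (1 + 2 * C) + l ^ 2 * (1 + C) * (K * D)) := by
  have hC := HL.nonneg
  have hN := Hf.nonneg
  have hK := gK_nonneg (l + 3)
  have hKD : 0 ≤ K * D := (abs_nonneg _).trans he
  have hS := Sx_cont HL s x
  have hL1 := HL.cont1
  have hfc := Hf.cont
  have hmc : Continuous m := continuous_iff_continuousAt.2 fun r => (hm r).continuousAt
  set X := x i with hX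
  have hE1 : 1 ≤ Real.exp |X| := Real.one_le_exp (abs_nonneg _)
  have hE2 : Real.exp (2 * |X|) = Real.exp |X| * Real.exp |X| := by
    rw [← Real.exp_add]; ring_nf
  set E := Real.exp |X| with hE
  -- the three remainders
  have r1 : ∀ z : Fin d → ℝ, |(f (X + s * z i) - f X - f1 X * (s * z i)
      - f2 X * (s * z i) ^ 2 / 2) * m (Sx L s x z)| ≤
      (N * s ^ 3 * E) * Real.exp ((l + 3) * |z i|) := fun z => by
    have a2 := Hf.taylor3 X (s * z i)
    rw [abs_mul s, abs_of_nonneg hs, Real.exp_add] at a2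
    have a3 := pow_mul_exp_le (k := 3) le_rfl hsl (z i)
    rw [abs_mul]
    calc _ ≤ (N * (s * |z i|) ^ 3 * (E * Real.exp (s * |z i|))) * 1 :=
          mul_le_mul a2 (b _) (abs_nonneg _) (by positivity)
      _ = N * s ^ 3 * E * (|z i| ^ 3 * Real.exp (s * |z i|)) := by ring
      _ ≤ _ := by gcongr
  have r2 : ∀ z : Fin d → ℝ, |(L1 (X + s * z i) - L1 X) * m' (Sx L s x z)| ≤
      (C * s * E) * Real.exp ((l + 3) * |z i|) := fun z => by
    have a2 := HL.taylor1' X (s * z i)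
    rw [abs_mul s, abs_of_nonneg hs, Real.exp_add] at a2
    have a3 := pow_mul_exp_le (k := 1) (by norm_num) hsl (z i)
    rw [pow_one] at a3
    rw [abs_mul]
    calc _ ≤ (C * (s * |z i|) * (E * Real.exp (s * |z i|))) * 1 :=
          mul_le_mul a2 (b' _) (abs_nonneg _) (by positivity)
      _ = C * s * E * (|z i| * Real.exp (s * |z i|)) := by ring
      _ ≤ _ := by gcongr
  have r3 : ∀ z : Fin d → ℝ, |z i * (s * L1 (X + s * z i) * m' (Sx L s x z))| ≤
      (C * s * E) * Real.exp ((l + 3) * |z i|) := fun z => by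
    have a2 := L1_growth HL hs X (z i)
    have a3 := pow_mul_exp_le (k := 1) (by norm_num) hsl (z i)
    rw [pow_one] at a3
    rw [abs_mul, abs_mul, abs_mul, abs_of_nonneg hs]
    calc _ ≤ |z i| * (s * (C * E * Real.exp (s * |z i|)) * 1) := by
          gcongr; exact b' _
      _ = C * s * E * (|z i| * Real.exp (s * |z i|)) := by ring
      _ ≤ _ := by gcongr
  have I1 : Integrable (fun z : Fin d → ℝ => (f (X + s * z i) - f X - f1 X * (s * z i)
      - f2 X * (s * z i) ^ 2 / 2) * m (Sx L s x z)) (gamPi d) :=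
    gamPi_integrable_of_bound (by fun_prop) i r1
  have I2 : Integrable (fun z : Fin d → ℝ => (L1 (X + s * z i) - L1 X) * m' (Sx L s x z))
      (gamPi d) := gamPi_integrable_of_bound (by fun_prop) i r2
  have I3 : Integrable (fun z : Fin d → ℝ => z i * (s * L1 (X + s * z i) * m' (Sx L s x z)))
      (gamPi d) := gamPi_integrable_of_bound (by fun_prop) i r3
  have Im : Integrable (fun z => m (Sx L s x z)) (gamPi d) :=
    Integrable.of_bound (by fun_prop : Continuous _).aestronglyMeasurable 1
      (Eventually.of_forall fun z => b _)
  have Im' : Integrable (fun z => m' (Sx L s x z)) (gamPi d) :=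
    Integrable.of_bound (by fun_prop : Continuous _).aestronglyMeasurable 1
      (Eventually.of_forall fun z => b' _)
  have Iz := int1 HL s x i hmc b
  have Izz : Integrable (fun z : Fin d → ℝ => z i * (z i * m (Sx L s x z))) (gamPi d) := by
    refine gamPi_integrable_of_bound (by fun_prop) i (A := 1) (c := 2) fun z => ?_
    have h1 := pow_le_exp_abs 2 (z i)
    push_cast at h1
    rw [abs_mul, abs_mul, one_mul]
    calc _ = |z i| ^ 2 * |m (Sx L s x z)| := by ring
      _ ≤ |z i| ^ 2 * 1 := by gcongr; exact b _
      _ ≤ _ := by rwa [mul_one]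
  have p1 := gamPi_integral_le i r1
  have p2 := gamPi_integral_le i r2
  have p3 := gamPi_integral_le i r3
  set R1 := ∫ z, (f (X + s * z i) - f X - f1 X * (s * z i)
      - f2 X * (s * z i) ^ 2 / 2) * m (Sx L s x z) ∂(gamPi d) with hR1
  set R2 := ∫ z, (L1 (X + s * z i) - L1 X) * m' (Sx L s x z) ∂(gamPi d) with hR2
  set R3 := ∫ z, z i * (s * L1 (X + s * z i) * m' (Sx L s x z)) ∂(gamPi d) with hR3
  set M := ∫ z, m (Sx L s x z) ∂(gamPi d) with hM
  set M' := ∫ z, m' (Sx L s x z) ∂(gamPi d) with hM'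
  have q1 : ∫ z, z i * m (Sx L s x z) ∂(gamPi d) = s * (R2 + L1 X * M') := by
    rw [ibp1 HL hs x i hm hm' b b', hR2, hM', ← integral_const_mul, ← integral_add I2
      (Im'.const_mul _), ← integral_const_mul]
    refine integral_congr_ae (Eventually.of_forall fun z => ?_)
    simp only [← hX]
    ring
  have q2 : ∫ z, z i * (z i * m (Sx L s x z)) ∂(gamPi d) = M + R3 := by
    rw [ibp2 HL hs x i hm hm' b b', hM, hR3, ← integral_add Im I3]
  have q3 : ∫ z, (f (X + s * z i) - f X) * m (Sx L s x z) ∂(gamPi d)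
      = R1 + f1 X * s * (s * (R2 + L1 X * M')) + f2 X * s ^ 2 / 2 * (M + R3) := by
    have J1 : Integrable (fun z : Fin d → ℝ => f1 X * s * (z i * m (Sx L s x z))) (gamPi d) :=
      Iz.const_mul _
    have J2 : Integrable (fun z : Fin d → ℝ => f2 X * s ^ 2 / 2 *
      (z i * (z i * m (Sx L s x z)))) (gamPi d) := Izz.const_mul _
    have J3 : Integrable (fun z : Fin d → ℝ => (f (X + s * z i) - f X - f1 X * (s * z i)
      - f2 X * (s * z i) ^ 2 / 2) * m (Sx L s x z) + f1 X * s * (z i * m (Sx L s x z)))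
      (gamPi d) := I1.add J1
    rw [← q1, ← q2, hR1, ← integral_const_mul, ← integral_const_mul, ← integral_add I1 J1,
      ← integral_add J3 J2]
    refine integral_congr_ae (Eventually.of_forall fun z => ?_)
    simp only
    ring
  -- the scaling `s² d = l²` turns the first- and second-order terms into the limit
  have q4 : d * ∫ z, (f (X + s * z i) - f X) * m (Sx L s x z) ∂(gamPi d)
      - (l ^ 2 / 2 * f2 X * e + l ^ 2 * f1 X * L1 X * e')
      = d * R1 + l ^ 2 * f1 X * R2 + l ^ 2 / 2 * f2 X * R3 + l ^ 2 / 2 * f2 X * (M - e)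
        + l ^ 2 * f1 X * L1 X * (M' - e') := by
    rw [q3, ← hd]; ring
  rw [q4]
  have h1 := Hf.b1 X
  have h2 := Hf.b2 X
  have h3 := HL.b1 X
  have d1 : |d * R1| ≤ N * (E * E) * (s * l ^ 2 * gK (l + 3)) := by
    rw [abs_mul, Nat.abs_cast]
    calc (d:ℝ) * |R1| ≤ d * (N * s ^ 3 * E * gK (l + 3)) := by gcongr
      _ = N * (1 * E) * (s * (s ^ 2 * d) * gK (l + 3)) := by ring
      _ ≤ N * (E * E) * (s * (s ^ 2 * d) * gK (l + 3)) := by gcongr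
      _ = _ := by rw [hd]
  have d2 : |l ^ 2 * f1 X * R2| ≤ N * (E * E) * (s * l ^ 2 * gK (l + 3) * C) := by
    rw [abs_mul, abs_mul, abs_of_nonneg (sq_nonneg l)]
    calc _ ≤ l ^ 2 * (N * E) * (C * s * E * gK (l + 3)) := by gcongr
      _ = _ := by ring
  have d3 : |l ^ 2 / 2 * f2 X * R3| ≤ N * (E * E) * (s * l ^ 2 * gK (l + 3) * (C / 2)) := by
    rw [abs_mul, abs_mul, abs_of_nonneg (by positivity : 0 ≤ l ^ 2 / 2)]
    calc _ ≤ l ^ 2 / 2 * (N * E) * (C * s * E * gK (l + 3)) := by gcongr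
      _ = _ := by ring
  have d4 : |l ^ 2 / 2 * f2 X * (M - e)| ≤ N * (E * E) * (l ^ 2 / 2 * (K * D)) := by
    rw [abs_mul, abs_mul, abs_of_nonneg (by positivity : 0 ≤ l ^ 2 / 2)]
    calc _ ≤ l ^ 2 / 2 * (N * E) * (K * D) := by gcongr
      _ = N * (1 * E) * (l ^ 2 / 2 * (K * D)) := by ring
      _ ≤ _ := by gcongr
  have d5 : |l ^ 2 * f1 X * L1 X * (M' - e')| ≤ N * (E * E) * (l ^ 2 * C * (K * D)) := by
    rw [abs_mul, abs_mul, abs_mul, abs_of_nonneg (sq_nonneg l)]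
    calc _ ≤ l ^ 2 * (N * E) * (C * E) * (K * D) := by gcongr
      _ = _ := by ring
  rw [hE2]
  have t : |d * R1 + l ^ 2 * f1 X * R2 + l ^ 2 / 2 * f2 X * R3 + l ^ 2 / 2 * f2 X * (M - e)
        + l ^ 2 * f1 X * L1 X * (M' - e')| ≤ |d * R1| + |l ^ 2 * f1 X * R2|
        + |l ^ 2 / 2 * f2 X * R3| + |l ^ 2 / 2 * f2 X * (M - e)|
        + |l ^ 2 * f1 X * L1 X * (M' - e')| :=
    (abs_add_le _ _).trans (add_le_add_left ((abs_add_le _ _).trans (add_le_add_left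
      (abs_add_three _ _ _) _)) _)
  have g1 : 0 ≤ N * (E * E) * (s * l ^ 2 * gK (l + 3) * (C / 2)) := by positivity
  have g2 : 0 ≤ N * (E * E) * (l ^ 2 / 2 * (K * D)) := by positivity
  linarith

end gen

/-! ### The acceptance function as a limit of smooth functions -/

/-- Smooth approximation `(1 + e^{-ar})^{-1/a}` of `min 1 (e^r)`. -/
def mS (a r : ℝ) : ℝ := Real.exp (-(Real.log (1 + Real.exp (-(a * r))) / a))

/-- The derivative of `mS a`. -/
def mS' (a r : ℝ) : ℝ := mS a r * (Real.exp (-(a * r)) / (1 + Real.exp (-(a * r))))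

lemma mS_hasDerivAt {a : ℝ} (ha : 0 < a) (r : ℝ) : HasDerivAt (mS a) (mS' a r) r := by
  have h0 : HasDerivAt (fun r => -(a * r)) (-a) r :=
    ((hasDerivAt_id r).const_mul a).neg.congr_deriv (by simp)
  have h1 : HasDerivAt (fun r => 1 + Real.exp (-(a * r))) (Real.exp (-(a * r)) * -a) r :=
    (h0.exp).const_add 1
  have hp : 0 < 1 + Real.exp (-(a * r)) := by positivity
  have h2 := (((h1.log hp.ne').div_const a).neg).exp
  refine h2.congr_deriv ?_
  unfold mS' mS
  simp only [Pi.neg_apply]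
  field_simp

lemma mS_cont {a : ℝ} (ha : 0 < a) : Continuous (mS a) :=
  continuous_iff_continuousAt.2 fun r => (mS_hasDerivAt ha r).continuousAt

lemma mS'_cont {a : ℝ} (ha : 0 < a) : Continuous (mS' a) := by
  have := mS_cont ha
  unfold mS'
  exact this.mul (Continuous.div (by fun_prop) (by fun_prop) fun r => by positivity)

lemma mS_bound {a : ℝ} (ha : 0 < a) (r : ℝ) : |mS a r| ≤ 1 := by
  unfold mS
  rw [abs_of_pos (Real.exp_pos _), Real.exp_le_one_iff, neg_nonpos]
  exact div_nonneg (Real.log_nonneg (by linarith [Real.exp_pos (-(a * r))])) ha.le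

lemma mS'_bound {a : ℝ} (ha : 0 < a) (r : ℝ) : |mS' a r| ≤ 1 := by
  unfold mS'
  rw [abs_mul]
  have hp := Real.exp_pos (-(a * r))
  refine mul_le_one₀ (mS_bound ha r) (abs_nonneg _) ?_
  rw [abs_of_nonneg (by positivity)]
  exact (div_le_one (by positivity)).2 (by linarith)

lemma mS_log_tendsto (r : ℝ) : Tendsto (fun n : ℕ =>
    Real.log (1 + Real.exp (-(((n:ℝ) + 1) * r))) / ((n:ℝ) + 1)) atTop (nhds (max 0 (-r))) := by
  rw [tendsto_iff_norm_sub_tendsto_zero]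
  have ht : Tendsto (fun n : ℕ => Real.log 2 * (1 / ((n:ℝ) + 1))) atTop (nhds 0) := by
    simpa using tendsto_one_div_add_atTop_nhds_zero_nat.const_mul (Real.log 2)
  refine squeeze_zero (fun _ => norm_nonneg _) (fun n => ?_) ht
  set a : ℝ := (n:ℝ) + 1
  have ha : 0 < a := by positivity
  have key : ∀ u : ℝ, |Real.log (1 + Real.exp u) - max 0 u| ≤ Real.log 2 := fun u => by
    have hp : 0 < 1 + Real.exp u := by positivity
    rw [abs_le]
    have l2 : 0 ≤ Real.log 2 := Real.log_nonneg (by norm_num)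
    rcases le_total u 0 with h | h
    · rw [max_eq_left h, sub_zero]
      have := Real.exp_le_one_iff.2 h
      exact ⟨by linarith [Real.log_nonneg (by linarith [Real.exp_pos u] : 1 ≤ 1 + Real.exp u)],
        Real.log_le_log hp (by linarith)⟩
    · rw [max_eq_right h]
      have h1 : u ≤ Real.log (1 + Real.exp u) := by
        rw [Real.le_log_iff_exp_le hp]; linarith
      have h2 : Real.log (1 + Real.exp u) ≤ Real.log 2 + u := by
        rw [Real.log_le_iff_le_exp hp, Real.exp_add, Real.exp_log two_pos]
        linarith [Real.one_le_exp h]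
      exact ⟨by linarith, by linarith⟩
  have h1 := key (-(a * r))
  have e : max 0 (-r) = max 0 (-(a * r)) / a := by
    rw [← max_div_div_right ha.le]
    congr 1
    · simp
    · field_simp
  rw [e, ← sub_div, norm_div, Real.norm_eq_abs, Real.norm_eq_abs, abs_of_pos ha,
    div_eq_mul_one_div]
  gcongr

lemma mS_tendsto (r : ℝ) : Tendsto (fun n : ℕ => mS ((n:ℝ) + 1) r) atTop
    (nhds (min 1 (Real.exp r))) := by
  have := (Real.continuous_exp.tendsto _).comp (mS_log_tendsto r).neg
  have e : Real.exp (-max 0 (-r)) = min 1 (Real.exp r) := by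
    rw [← Real.exp_zero, ← Real.exp_monotone.map_min, ← min_neg_neg]
    simp
  rw [e] at this
  exact this

lemma mS'_tendsto {r : ℝ} (hr : r ≠ 0) : Tendsto (fun n : ℕ => mS' ((n:ℝ) + 1) r) atTop
    (nhds ((Iio (0:ℝ)).indicator Real.exp r)) := by
  have hn : Tendsto (fun n : ℕ => (n:ℝ) + 1) atTop atTop :=
    tendsto_atTop_add_const_right _ _ tendsto_natCast_atTop_atTop
  have h1 := mS_tendsto r
  rcases lt_or_gt_of_ne hr with h | h
  · rw [indicator_of_mem (show r ∈ Iio (0:ℝ) from h)]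
    rw [min_eq_right (Real.exp_le_one_iff.2 h.le)] at h1
    have h2 : Tendsto (fun n : ℕ => Real.exp (((n:ℝ) + 1) * r)) atTop (nhds 0) :=
      Real.tendsto_exp_atBot.comp (hn.atTop_mul_const_of_neg h)
    have h3 : Tendsto (fun n : ℕ => 1 / (Real.exp (((n:ℝ) + 1) * r) + 1)) atTop
        (nhds (1 / (0 + 1))) := tendsto_const_nhds.div (h2.add_const 1) (by norm_num)
    have h4 := h1.mul h3
    norm_num at h4
    refine h4.congr fun n => ?_
    unfold mS'
    congr 1
    rw [Real.exp_neg]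
    have := Real.exp_pos (((n:ℝ) + 1) * r)
    field_simp
  · rw [indicator_of_notMem (show r ∉ Iio (0:ℝ) from not_lt.2 h.le)]
    have h2 : Tendsto (fun n : ℕ => Real.exp (-(((n:ℝ) + 1) * r))) atTop (nhds 0) :=
      Real.tendsto_exp_neg_atTop_nhds_zero.comp (hn.atTop_mul_const h)
    have h3 : Tendsto (fun n : ℕ => Real.exp (-(((n:ℝ) + 1) * r)) /
        (1 + Real.exp (-(((n:ℝ) + 1) * r)))) atTop (nhds (0 / (1 + 0))) :=
      h2.div (h2.const_add 1) (by norm_num)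
    have h4 := h1.mul h3
    norm_num at h4
    exact h4

/-- Exponential tilting of the Gaussian measure on a half line. -/
lemma gam_tilt (τ : ℝ) : ∫ w, (Iio (0:ℝ)).indicator Real.exp (τ * w - τ ^ 2 / 2) ∂gam
    = ∫ w, (Iio (0:ℝ)).indicator (fun _ => (1:ℝ)) (τ * w + τ ^ 2 / 2) ∂gam := by
  rw [gam, integral_gaussianReal_eq_integral_smul one_ne_zero,
    integral_gaussianReal_eq_integral_smul one_ne_zero]
  rw [← integral_sub_right_eq_self (fun w => gaussianPDFReal 0 1 w •
    (Iio (0:ℝ)).indicator (fun _ => (1:ℝ)) (τ * w + τ ^ 2 / 2)) τ]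
  refine integral_congr_ae (Eventually.of_forall fun w => ?_)
  simp only [smul_eq_mul, indicator_apply, mem_Iio]
  have e : τ * (w - τ) + τ ^ 2 / 2 = τ * w - τ ^ 2 / 2 := by ring
  rw [e]
  split_ifs
  · rw [mul_one, gaussianPDFReal, gaussianPDFReal, mul_assoc, ← Real.exp_add]
    congr 2
    simp
    ring
  · simp

lemma gam_Iio_eq (t : ℝ) : gam.real (Iio t) = stdCDF t := by
  have : NullSingletonClass gam := nullSingletonClass_gaussianReal one_ne_zero
  rw [stdCDF, Measure.real, measure_congr Iio_ae_eq_Iic]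

lemma gam_Ici_eq (t : ℝ) : gam.real (Ici t) = stdCDF (-t) := by
  have h : gam.map (fun x => -x) = gam := by rw [gaussianReal_map_neg, neg_zero]
  rw [stdCDF, Measure.real, ← h, Measure.map_apply measurable_neg measurableSet_Ici]
  congr 2
  ext x
  simp

/-- `E[e^R; R < 0] = Φ(-τ/2)` for `R ~ N(-τ²/2, τ²)`. -/
lemma gauss_ind {τ : ℝ} (hτ : 0 < τ) :
    ∫ w, (Iio (0:ℝ)).indicator Real.exp (τ * w - τ ^ 2 / 2) ∂gam = stdCDF (-τ / 2) := by
  rw [gam_tilt, ← gam_Iio_eq, ← integral_indicator_one measurableSet_Iio]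
  refine integral_congr_ae (Eventually.of_forall fun w => ?_)
  simp only [indicator_apply, mem_Iio, Pi.one_apply]
  refine if_congr ?_ rfl rfl
  constructor <;> intro h <;> nlinarith

/-- `E min(1, e^R) = 2 Φ(-τ/2)` for `R ~ N(-τ²/2, τ²)`. -/
lemma gauss_min {τ : ℝ} (hτ : 0 < τ) :
    ∫ w, min 1 (Real.exp (τ * w - τ ^ 2 / 2)) ∂gam = 2 * stdCDF (-τ / 2) := by
  have e : ∀ w : ℝ, min 1 (Real.exp (τ * w - τ ^ 2 / 2)) =
      (Ici (τ / 2)).indicator 1 w + (Iio (0:ℝ)).indicator Real.exp (τ * w - τ ^ 2 / 2) := by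
    intro w
    simp only [indicator_apply, mem_Iio, mem_Ici, Pi.one_apply]
    rcases lt_or_ge w (τ / 2) with h | h
    · have h' : τ * w - τ ^ 2 / 2 < 0 := by nlinarith
      rw [if_neg (not_le.2 h), if_pos h', zero_add, min_eq_right (Real.exp_le_one_iff.2 h'.le)]
    · have h' : 0 ≤ τ * w - τ ^ 2 / 2 := by nlinarith
      rw [if_pos h, if_neg (not_lt.2 h'), add_zero, min_eq_left (Real.one_le_exp h')]
  have i1 : Integrable (fun w : ℝ => (Ici (τ / 2)).indicator (1 : ℝ → ℝ) w) gam :=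
    (integrable_const (1:ℝ)).indicator measurableSet_Ici
  have i2 : Integrable (fun w : ℝ => (Iio (0:ℝ)).indicator Real.exp (τ * w - τ ^ 2 / 2)) gam := by
    refine Integrable.of_bound (C := 1) ?_ (Eventually.of_forall fun w => ?_)
    · exact ((Real.measurable_exp.indicator measurableSet_Iio).comp
        (by fun_prop : Measurable fun w : ℝ => τ * w - τ ^ 2 / 2)).aestronglyMeasurable
    · simp only [indicator_apply, mem_Iio]
      split_ifs with h
      · rw [Real.norm_eq_abs, Real.abs_exp]; exact Real.exp_le_one_iff.2 h.le
      · simp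
  simp only [e]
  rw [integral_add i1 i2, gauss_ind hτ, integral_indicator_one measurableSet_Ici, gam_Ici_eq,
    neg_div]
  ring

section gen
variable {L L1 L2 L3 : ℝ → ℝ} {C : ℝ}

/-- The pointwise generator estimate: the discrepancy between the rescaled RWM increment and the
Langevin generator is controlled by `s` and `Dx`. -/
lemma gen_bound (HL : ExpC3 L L1 L2 L3 C) {l J : ℝ} (hl : 0 < l) (hJ : 0 < J) :
    ∃ K : ℝ, 0 ≤ K ∧ ∀ (f f1 f2 f3 : ℝ → ℝ) (N : ℝ), ExpC3 f f1 f2 f3 N → ∀ (d : ℕ) (s : ℝ),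
    0 ≤ s → s ≤ l → s ^ 2 * d = l ^ 2 → ∀ (x : Fin d → ℝ) (i : Fin d),
    |d * ∫ z, (f (x i + s * z i) - f (x i)) * min 1 (Real.exp (Sx L s x z)) ∂(gamPi d)
      - l ^ 2 * stdCDF (-(l * √J) / 2) * (f2 (x i) + L1 (x i) * f1 (x i))| ≤
      N * Real.exp (2 * |x i|) *
        (s * l ^ 2 * gK (l + 3) * (1 + 2 * C) + l ^ 2 * (1 + C) *
          (K * Dx L1 L2 J s (cD C l) x)) := by
  set τ := l * √J with hτd
  have hτ : 0 < τ := mul_pos hl (Real.sqrt_pos.2 hJ)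
  have hτ2 : τ ^ 2 = l ^ 2 * J := by rw [hτd, mul_pow, Real.sq_sqrt hJ.le]
  obtain ⟨K, hK, HK⟩ := stein_scaled hτ
  refine ⟨K, hK, fun f f1 f2 f3 N Hf d s hs hsl hd x i => ?_⟩
  have cmp : ∀ h : ℝ → ℝ, Continuous h → (∀ r, |h r| ≤ 1) →
      |∫ z, h (Sx L s x z) ∂(gamPi d) - ∫ w, h (τ * w - τ ^ 2 / 2) ∂gam| ≤
        K * Dx L1 L2 J s (cD C l) x := fun h hc hb => by
    obtain ⟨φ, φ', c1, c2, c3, c4, c5⟩ := HK h hc hb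
    exact stein_cmp HL hs hsl hd x hc hb c1 c2 (fun r => by rw [← hτ2]; exact c3 r) c4 c5
  have hn : ∀ n : ℕ, (0:ℝ) < (n:ℝ) + 1 := fun n => by positivity
  have bd := fun n : ℕ => gen_smooth HL Hf hs hsl hd x i (mS_hasDerivAt (hn n)) (mS'_cont (hn n))
    (mS_bound (hn n)) (mS'_bound (hn n)) (cmp _ (mS_cont (hn n)) (mS_bound (hn n)))
    (cmp _ (mS'_cont (hn n)) (mS'_bound (hn n)))
  have hS := Sx_cont HL s x
  have hfc := Hf.cont
  have l1 : Tendsto (fun n : ℕ => ∫ w, mS ((n:ℝ) + 1) (τ * w - τ ^ 2 / 2) ∂gam) atTop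
      (nhds (2 * stdCDF (-τ / 2))) := by
    rw [← gauss_min hτ]
    refine tendsto_integral_of_dominated_convergence (fun _ => 1)
      (fun n => ((mS_cont (hn n)).comp (by fun_prop)).aestronglyMeasurable) (integrable_const _)
      (fun n => Eventually.of_forall fun w => mS_bound (hn n) _)
      (Eventually.of_forall fun w => mS_tendsto _)
  have l2 : Tendsto (fun n : ℕ => ∫ w, mS' ((n:ℝ) + 1) (τ * w - τ ^ 2 / 2) ∂gam) atTop
      (nhds (stdCDF (-τ / 2))) := by
    rw [← gauss_ind hτ]
    refine tendsto_integral_of_dominated_convergence (fun _ => 1)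
      (fun n => ((mS'_cont (hn n)).comp (by fun_prop)).aestronglyMeasurable) (integrable_const _)
      (fun n => Eventually.of_forall fun w => mS'_bound (hn n) _) ?_
    have : NullSingletonClass gam := nullSingletonClass_gaussianReal one_ne_zero
    -- the limit fails only at the jump of the indicator, which is a Gaussian null set
    have ae : ∀ᵐ w ∂gam, w ≠ τ / 2 := by
      rw [ae_iff]; simp
    filter_upwards [ae] with w hw
    refine mS'_tendsto fun h => hw ?_
    have : τ * (w - τ / 2) = 0 := by linarith
    rcases mul_eq_zero.1 this with h' | h'
    · exact absurd h' hτ.ne'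
    · linarith
  have l3 : Tendsto (fun n : ℕ => ∫ z, (f (x i + s * z i) - f (x i)) *
      mS ((n:ℝ) + 1) (Sx L s x z) ∂(gamPi d)) atTop
      (nhds (∫ z, (f (x i + s * z i) - f (x i)) * min 1 (Real.exp (Sx L s x z)) ∂(gamPi d))) := by
    have ib : Integrable (fun z : Fin d → ℝ => f (x i + s * z i) - f (x i)) (gamPi d) := by
      have hN := Hf.nonneg
      refine gamPi_integrable_of_bound (by fun_prop) i (A := N * s * Real.exp |x i|)
        (c := l + 3) fun z => ?_
      have a2 := Hf.taylor1 (x i) (s * z i)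
      rw [abs_mul s, abs_of_nonneg hs, Real.exp_add] at a2
      have a3 := pow_mul_exp_le (k := 1) (by norm_num) hsl (z i)
      rw [pow_one] at a3
      calc _ ≤ _ := a2
        _ = N * s * Real.exp |x i| * (|z i| * Real.exp (s * |z i|)) := by ring
        _ ≤ _ := by gcongr
    refine tendsto_integral_of_dominated_convergence
      (fun z => ‖f (x i + s * z i) - f (x i)‖)
      (fun n => ?_) ib.norm
      (fun n => Eventually.of_forall fun w => ?_)
      (Eventually.of_forall fun w => (mS_tendsto _).const_mul _)
    · exact ((by fun_prop : Continuous fun z : Fin d → ℝ => f (x i + s * z i) - f (x i)).mul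
        ((mS_cont (hn n)).comp hS)).aestronglyMeasurable
    · rw [norm_mul]
      exact mul_le_of_le_one_right (norm_nonneg _) (mS_bound (hn n) _)
  have lim := ((l3.const_mul (d:ℝ)).sub ((l1.const_mul (l ^ 2 / 2 * f2 (x i))).add
    (l2.const_mul (l ^ 2 * f1 (x i) * L1 (x i))))).abs
  have fin := le_of_tendsto lim (Eventually.of_forall bd)
  refine le_of_eq_of_le ?_ fin
  congr 1
  ring

end gen

/-! ### The generators in terms of `Sx`, and regularity of `f` and `log ρ` -/

lemma gaussPi_eq_map {l : ℝ} (hl : 0 < l) {d : ℕ} (hd : 0 < d) (x : Fin d → ℝ) :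
    gaussPi l d x = (gamPi d).map (fun z i => x i + l / √d * z i) := by
  have hf : ∀ i, AEMeasurable (fun t : ℝ => x i + l / √d * t) gam := fun i => by fun_prop
  have : ∀ i, SigmaFinite (gam.map (fun t : ℝ => x i + l / √d * t)) := fun i => by
    have := Measure.isProbabilityMeasure_map (hf i)
    infer_instance
  rw [gaussPi, gamPi, Measure.pi_map_pi hf]
  congr 1
  ext1 i
  have e : (fun t : ℝ => x i + l / √d * t) = (fun t => x i + t) ∘ (fun t => l / √d * t) := rfl
  rw [e, ← Measure.map_map (by fun_prop) (by fun_prop), gaussianReal_map_const_mul,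
    gaussianReal_map_const_add]
  congr 1
  · simp
  · ext
    have : (0:ℝ) ≤ d := by positivity
    rw [Real.coe_toNNReal _ (by positivity)]
    simp [div_pow, Real.sq_sqrt this]

/-- The generator `G_d` as an integral over the standard Gaussian measure. -/
lemma Gd_eq {ρ : ℝ → ℝ} (hmeas : Measurable ρ) (hpos : ∀ x, 0 < ρ x) {l : ℝ} (hl : 0 < l)
    {d : ℕ} [NeZero d] {f : ℝ → ℝ} (hf : Continuous f) (x : Fin d → ℝ) :
    Gd ρ l d f x = d * ∫ z, (f (x 0 + l / √d * z 0) - f (x 0)) *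
      min 1 (Real.exp (Sx (fun t => Real.log (ρ t)) (l / √d) x z)) ∂(gamPi d) := by
  have hfm := hf.measurable
  have hφ : Measurable fun (z : Fin d → ℝ) i => x i + l / √d * z i :=
    measurable_pi_lambda _ fun i => by fun_prop
  rw [Gd, gaussPi_eq_map hl (NeZero.pos d), integral_map hφ.aemeasurable]
  · congr 2
    ext z
    congr 2
    rw [Sx, Real.exp_sum, ← Finset.prod_div_distrib]
    refine Finset.prod_congr rfl fun i _ => ?_
    rw [Real.exp_sub, Real.exp_log (hpos _), Real.exp_log (hpos _)]
  · refine Measurable.aestronglyMeasurable ?_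
    refine (by fun_prop : Measurable fun y : Fin d → ℝ => f (y 0) - f (x 0)).mul
      (measurable_const.min (Measurable.div_const ?_ _))
    fun_prop

lemma memS_bound {n : ℕ} {g : ℝ → ℝ} (h : MemS n g) {s : ℝ} (hs : 0 < s) {i : ℕ} (hi : i ≤ n)
    (x : ℝ) : |iteratedDeriv i g x| ≤ normIS (iteratedDeriv i g) s * Real.exp (s * |x|) := by
  have := le_ciSup (h.2 s hs i hi) x
  calc |iteratedDeriv i g x|
      = (Real.exp (-(s * |x|)) * |iteratedDeriv i g x|) * Real.exp (s * |x|) := by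
        rw [mul_right_comm, ← Real.exp_add]; simp
    _ ≤ _ := mul_le_mul_of_nonneg_right this (Real.exp_pos _).le

lemma normIS_nonneg (g : ℝ → ℝ) (s : ℝ) : 0 ≤ normIS g s :=
  Real.iSup_nonneg fun _ => mul_nonneg (Real.exp_pos _).le (abs_nonneg _)

/-- Functions in `S³` satisfy `ExpC3` with the sum of the weighted norms of their derivatives. -/
lemma memS_expC3 {n : ℕ} {g : ℝ → ℝ} (h : MemS n g) (hn : 3 ≤ n) {s : ℝ} (hs : 0 < s)
    (hs1 : s ≤ 1) : ExpC3 g (deriv g) (deriv (deriv g)) (iteratedDeriv 3 g)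
      (∑ i ∈ Finset.Icc 1 3, normIS (iteratedDeriv i g) s) := by
  have hb : ∀ i ∈ Finset.Icc 1 3, ∀ x, |iteratedDeriv i g x| ≤
      (∑ i ∈ Finset.Icc 1 3, normIS (iteratedDeriv i g) s) * Real.exp |x| := fun i hi x => by
    refine (memS_bound h hs ((Finset.mem_Icc.1 hi).2.trans hn) x).trans ?_
    refine mul_le_mul (Finset.single_le_sum (f := fun i => normIS (iteratedDeriv i g) s)
      (fun i _ => normIS_nonneg _ _) hi) (Real.exp_le_exp.2 ?_)
      (Real.exp_pos _).le (Finset.sum_nonneg fun i _ => normIS_nonneg _ _)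
    exact mul_le_of_le_one_left (abs_nonneg x) hs1
  have hd : ∀ k < 3, ∀ x, HasDerivAt (iteratedDeriv k g) (iteratedDeriv (k + 1) g x) x := by
    intro k hk x
    rw [iteratedDeriv_succ]
    exact ((h.1.differentiable_iteratedDeriv k
      (by exact_mod_cast hk.trans_le hn)) x).hasDerivAt
  have e1 : iteratedDeriv 1 g = deriv g := iteratedDeriv_one
  have e2 : iteratedDeriv 2 g = deriv (deriv g) := by
    rw [iteratedDeriv_succ, e1]
  constructor
  · intro x
    have := hd 0 (by norm_num) x
    rwa [iteratedDeriv_zero, zero_add, e1] at this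
  · intro x
    have := hd 1 (by norm_num) x
    rwa [e1, e2] at this
  · intro x
    have := hd 2 (by norm_num) x
    rwa [e2] at this
  · exact Finset.sum_nonneg fun i _ => normIS_nonneg _ _
  · rw [← e1]; exact hb 1 (by simp)
  · rw [← e2]; exact hb 2 (by simp)
  · exact hb 3 (by simp)

/-! ### Moments of the target density -/

/-- The one-dimensional target measure with density `ρ`. -/
abbrev nu (ρ : ℝ → ℝ) : Measure ℝ := volume.withDensity fun x => ENNReal.ofReal (ρ x)

section target
variable {ρ : ℝ → ℝ}

lemma nu_prob (hpos : ∀ x, 0 < ρ x) (hint : ∫ x, ρ x = 1) : IsProbabilityMeasure (nu ρ) := by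
  have hi : Integrable ρ := by
    by_contra h
    rw [integral_undef h] at hint
    exact zero_ne_one hint
  refine ⟨?_⟩
  rw [nu, withDensity_apply _ MeasurableSet.univ, Measure.restrict_univ,
    ← ofReal_integral_eq_lintegral_ofReal hi (Eventually.of_forall fun x => (hpos x).le), hint,
    ENNReal.ofReal_one]

lemma nu_integrable_iff (hmeas : Measurable ρ) (hpos : ∀ x, 0 < ρ x) (g : ℝ → ℝ) :
    Integrable g (nu ρ) ↔ Integrable (fun x => ρ x * g x) := by
  rw [nu, integrable_withDensity_iff_integrable_smul₀' hmeas.ennreal_ofReal.aemeasurable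
    (Eventually.of_forall fun _ => ENNReal.ofReal_lt_top)]
  simp [ENNReal.toReal_ofReal (hpos _).le]

lemma nu_integral (hmeas : Measurable ρ) (hpos : ∀ x, 0 < ρ x) (g : ℝ → ℝ) :
    ∫ x, g x ∂(nu ρ) = ∫ x, ρ x * g x := by
  rw [nu, integral_withDensity_eq_integral_toReal_smul hmeas.ennreal_ofReal
    (Eventually.of_forall fun _ => ENNReal.ofReal_lt_top)]
  simp [ENNReal.toReal_ofReal (hpos _).le]

/-- If the derivative of `L` tends to `-∞`, then `e^L` decays faster than any exponential. -/
lemma tail_isBigO {L L1 : ℝ → ℝ} (hL : ∀ x, HasDerivAt L (L1 x) x)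
    (ht : Tendsto L1 atTop atBot) (a : ℝ) :
    (fun x => Real.exp (L x + a * |x|)) =O[atTop] fun x => Real.exp (-x) := by
  obtain ⟨M, hM⟩ := (tendsto_atBot.1 ht (-(a + 1))).exists_forall_of_atTop
  have hu : ∀ x, HasDerivAt (fun x => L x + (a + 1) * x) (L1 x + (a + 1)) x := fun x =>
    ((hL x).add ((hasDerivAt_id x).const_mul (a + 1))).congr_deriv (by simp)
  have anti : AntitoneOn (fun x => L x + (a + 1) * x) (Ici M) := by
    refine antitoneOn_of_deriv_nonpos (convex_Ici M)
      (fun x _ => (hu x).continuousAt.continuousWithinAt)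
      (fun x _ => (hu x).differentiableAt.differentiableWithinAt) fun x hx => ?_
    rw [(hu x).deriv]
    rw [interior_Ici] at hx
    linarith [hM x (le_of_lt hx)]
  refine Asymptotics.IsBigO.of_bound (Real.exp (L M + (a + 1) * M)) ?_
  filter_upwards [eventually_ge_atTop M, eventually_ge_atTop 0] with x h1 h2
  rw [Real.norm_eq_abs, Real.norm_eq_abs, Real.abs_exp, Real.abs_exp, ← Real.exp_add,
    abs_of_nonneg h2]
  refine Real.exp_le_exp.2 ?_
  have : L x + (a + 1) * x ≤ L M + (a + 1) * M := anti self_mem_Ici (mem_Ici.2 h1) h1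
  linarith

/-- Super-exponential tails give all exponential moments. -/
lemma nu_exp (hmeas : Measurable ρ) (hpos : ∀ x, 0 < ρ x)
    (hL : ∀ x, HasDerivAt (fun t => Real.log (ρ t)) (dl ρ x) x) (htail : SuperExpTails ρ) (a : ℝ) :
    Integrable (fun x => Real.exp (a * |x|)) (nu ρ) := by
  rw [nu_integrable_iff hmeas hpos]
  have e : (fun x => ρ x * Real.exp (a * |x|)) =
      fun x => Real.exp (Real.log (ρ x) + a * |x|) := by
    ext x; rw [Real.exp_add, Real.exp_log (hpos x)]
  rw [e]
  have hc : Continuous fun t => Real.log (ρ t) :=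
    continuous_iff_continuousAt.2 fun x => (hL x).continuousAt
  have hL' : ∀ x, HasDerivAt (fun t => Real.log (ρ (-t))) (-dl ρ (-x)) x := fun x => by
    have := (hL (-x)).scomp x (hasDerivAt_neg x)
    exact this.congr_deriv (by simp)
  refine LocallyIntegrable.integrable_of_isBigO_atBot_atTop (g := fun x => Real.exp x)
    (g' := fun x => Real.exp (-x))
    (by fun_prop : Continuous _).locallyIntegrable ?_ ?_ (tail_isBigO hL htail.1 a) ?_
  · have h := (tail_isBigO hL' (tendsto_neg_atTop_atBot.comp
      (htail.2.comp tendsto_neg_atTop_atBot)) a).comp_tendsto tendsto_neg_atBot_atTop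
    refine h.congr (fun x => ?_) (fun x => ?_) <;> simp
  · exact ⟨Iic 0, Iic_mem_atBot 0, integrableOn_exp_Iic 0⟩
  · refine ⟨Ioi 0, Ioi_mem_atTop 0, ?_⟩
    simpa using exp_neg_integrableOn_Ioi 0 one_pos

lemma nu_integrable_of_bound (he : ∀ a : ℝ, Integrable (fun x => Real.exp (a * |x|)) (nu ρ))
    {g : ℝ → ℝ} (hg : Continuous g) {A c : ℝ} (hb : ∀ z, |g z| ≤ A * Real.exp (c * |z|)) :
    Integrable g (nu ρ) :=
  ((he c).const_mul A).mono' hg.aestronglyMeasurable (Eventually.of_forall hb)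

variable {C : ℝ} {L3 : ℝ → ℝ}

lemma sq_L1_bound (HL : ExpC3 (fun t => Real.log (ρ t)) (dl ρ) (d2l ρ) L3 C) (x : ℝ) :
    |dl ρ x ^ 2| ≤ C ^ 2 * Real.exp (2 * |x|) := by
  rw [abs_pow, mul_comm 2, Real.exp_mul, Real.rpow_two, ← mul_pow]
  exact pow_le_pow_left₀ (abs_nonneg _) (HL.b1 x) 2

lemma L2_bound (HL : ExpC3 (fun t => Real.log (ρ t)) (dl ρ) (d2l ρ) L3 C) (x : ℝ) :
    |d2l ρ x| ≤ C * Real.exp (2 * |x|) :=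
  (HL.b2 x).trans (mul_le_mul_of_nonneg_left
    (Real.exp_le_exp.2 (by linarith [abs_nonneg x])) HL.nonneg)

lemma Jc_eq (hmeas : Measurable ρ) (hpos : ∀ x, 0 < ρ x) : Jc ρ = ∫ x, dl ρ x ^ 2 ∂(nu ρ) := by
  rw [nu_integral hmeas hpos, Jc, rhoE]
  simp only [mul_comm]

/-- `J > 0`, since `(log ρ)'` is continuous and nonzero far out. -/
lemma Jc_pos (hmeas : Measurable ρ) (hpos : ∀ x, 0 < ρ x)
    (HL : ExpC3 (fun t => Real.log (ρ t)) (dl ρ) (d2l ρ) L3 C) (htail : SuperExpTails ρ) :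
    0 < Jc ρ := by
  have he := nu_exp hmeas hpos HL.hd1 htail
  have hρ : Continuous ρ := by
    have : ρ = fun x => Real.exp (Real.log (ρ x)) := by ext x; rw [Real.exp_log (hpos x)]
    rw [this]; exact Real.continuous_exp.comp HL.cont
  have hL1 := HL.cont1
  have hi := (nu_integrable_iff hmeas hpos _).1
    (nu_integrable_of_bound he (by fun_prop) (sq_L1_bound HL))
  obtain ⟨x, hx⟩ := (htail.1.eventually_lt_atBot 0).exists
  rw [Jc_eq hmeas hpos, nu_integral hmeas hpos]
  exact integral_pos_of_integrable_nonneg_nonzero (x := x) (by fun_prop) hi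
    (fun x => mul_nonneg (hpos x).le (sq_nonneg _))
    (mul_ne_zero (hpos x).ne' (pow_ne_zero 2 hx.ne))

lemma eta1_mean (hmeas : Measurable ρ) (hpos : ∀ x, 0 < ρ x) (hint : ∫ x, ρ x = 1)
    (HL : ExpC3 (fun t => Real.log (ρ t)) (dl ρ) (d2l ρ) L3 C) (htail : SuperExpTails ρ) :
    ∫ x, (dl ρ x ^ 2 - Jc ρ) ∂(nu ρ) = 0 := by
  have := nu_prob hpos hint
  have he := nu_exp hmeas hpos HL.hd1 htail
  have hL1 := HL.cont1
  rw [integral_sub (nu_integrable_of_bound he (by fun_prop) (sq_L1_bound HL)) (integrable_const _),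
    ← Jc_eq hmeas hpos]
  simp

/-- Integration by parts: `∫ (log ρ)'' ρ = -J`. -/
lemma eta2_mean (hmeas : Measurable ρ) (hpos : ∀ x, 0 < ρ x) (hint : ∫ x, ρ x = 1)
    (HL : ExpC3 (fun t => Real.log (ρ t)) (dl ρ) (d2l ρ) L3 C) (htail : SuperExpTails ρ) :
    ∫ x, (d2l ρ x + Jc ρ) ∂(nu ρ) = 0 := by
  have := nu_prob hpos hint
  have he := nu_exp hmeas hpos HL.hd1 htail
  have hL1 := HL.cont1
  have hL2 := HL.cont2
  have i1 := nu_integrable_of_bound he (by fun_prop) (sq_L1_bound HL)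
  have i2 := nu_integrable_of_bound he (by fun_prop) (L2_bound HL)
  have i3 : Integrable (dl ρ) (nu ρ) := nu_integrable_of_bound he (by fun_prop) (A := C) (c := 1)
    (fun z => by simpa using HL.b1 z)
  have hρ : ∀ x, HasDerivAt ρ (dl ρ x * ρ x) x := fun x => by
    have e : ρ = fun x => Real.exp (Real.log (ρ x)) := by ext x; rw [Real.exp_log (hpos x)]
    have h := (HL.hd1 x).exp
    rw [← e] at h
    exact h.congr_deriv (by rw [Real.exp_log (hpos x)]; ring)
  have key : ∫ x, ρ x * (d2l ρ x + dl ρ x ^ 2) = 0 := by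
    refine integral_eq_zero_of_hasDerivAt_of_integrable (f := fun x => ρ x * dl ρ x) (fun x => ?_)
      ((nu_integrable_iff hmeas hpos _).1 (i2.add i1)) ((nu_integrable_iff hmeas hpos _).1 i3)
    exact ((hρ x).mul (HL.hd2 x)).congr_deriv (by ring)
  rw [← nu_integral hmeas hpos, integral_add i2 i1, ← Jc_eq hmeas hpos] at key
  rw [integral_add i2 (integrable_const _)]
  simpa using key

end target

/-! ### Integration over the target -/

section outer
variable {ν : Measure ℝ} [IsProbabilityMeasure ν]

/-- Integrability and integral bound for functions of three coordinates with exponential growth. -/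
lemma three_exp (he : ∀ a : ℝ, Integrable (fun x => Real.exp (a * |x|)) ν) {d : ℕ}
    {F : (Fin d → ℝ) → ℝ} (hF : Continuous F) (i j k : Fin d) {A : ℝ}
    (hb : ∀ x, |F x| ≤ A * (Real.exp (4 * |x i|) * Real.exp (4 * |x j|) * Real.exp (4 * |x k|))) :
    Integrable F (Measure.pi fun _ : Fin d => ν) ∧
    ∫ x, F x ∂(Measure.pi fun _ : Fin d => ν) ≤ 3 * A * ∫ t, Real.exp (12 * |t|) ∂ν := by
  have hA : 0 ≤ A := by
    by_contra h
    have h1 := (abs_nonneg _).trans (hb 0)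
    have h2 : 0 < Real.exp (4 * |(0 : Fin d → ℝ) i|) * Real.exp (4 * |(0 : Fin d → ℝ) j|) *
      Real.exp (4 * |(0 : Fin d → ℝ) k|) := by positivity
    nlinarith
  have e12 : ∀ t : ℝ, Real.exp (12 * |t|) = Real.exp (4 * |t|) ^ 3 := fun t => by
    rw [← Real.exp_nat_mul]; push_cast; ring_nf
  have ie : ∀ i : Fin d, Integrable (fun x : Fin d → ℝ => Real.exp (12 * |x i|))
      (Measure.pi fun _ : Fin d => ν) := fun i =>
    integrable_comp_eval (μ := fun _ : Fin d => ν) (i := i)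
      (f := fun z : ℝ => Real.exp (12 * |z|)) (he 12)
  have iv : ∀ i : Fin d, ∫ x : Fin d → ℝ, Real.exp (12 * |x i|) ∂(Measure.pi fun _ : Fin d => ν)
      = ∫ t, Real.exp (12 * |t|) ∂ν := fun i =>
    integral_comp_eval (μ := fun _ : Fin d => ν) (i := i)
      (f := fun z : ℝ => Real.exp (12 * |z|)) (he 12).aestronglyMeasurable
  have amgm : ∀ a b c : ℝ, 0 ≤ a → 0 ≤ b → 0 ≤ c → a * b * c ≤ a ^ 3 + b ^ 3 + c ^ 3 := by
    intro a b c ha hb hc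
    nlinarith [mul_nonneg (add_nonneg (add_nonneg ha hb) hc)
      (add_nonneg (add_nonneg (sq_nonneg (a - b)) (sq_nonneg (b - c))) (sq_nonneg (a - c))),
      mul_nonneg (mul_nonneg ha hb) hc]
  have iij : Integrable (fun x : Fin d → ℝ => Real.exp (12 * |x i|) + Real.exp (12 * |x j|))
      (Measure.pi fun _ : Fin d => ν) := (ie i).add (ie j)
  have is : Integrable (fun x : Fin d → ℝ => A * (Real.exp (12 * |x i|) + Real.exp (12 * |x j|)
      + Real.exp (12 * |x k|))) (Measure.pi fun _ : Fin d => ν) :=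
    (iij.add (ie k)).const_mul A
  have hb' : ∀ x, |F x| ≤ A * (Real.exp (12 * |x i|) + Real.exp (12 * |x j|)
      + Real.exp (12 * |x k|)) := fun x => by
    refine (hb x).trans (mul_le_mul_of_nonneg_left ?_ hA)
    rw [e12, e12, e12]
    exact amgm _ _ _ (Real.exp_pos _).le (Real.exp_pos _).le (Real.exp_pos _).le
  have iF : Integrable F (Measure.pi fun _ : Fin d => ν) :=
    is.mono' hF.aestronglyMeasurable (Eventually.of_forall hb')
  refine ⟨iF, ?_⟩
  refine (integral_mono iF is fun x => (le_abs_self _).trans (hb' x)).trans ?_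
  rw [integral_const_mul, integral_add iij (ie k), integral_add (ie i) (ie j), iv, iv, iv]
  apply le_of_eq
  ring

lemma exp4_ge_one (t : ℝ) : 1 ≤ Real.exp (4 * |t|) := Real.one_le_exp (by positivity)

lemma exp4_eq (t : ℝ) : Real.exp (4 * |t|) = Real.exp (2 * |t|) ^ 2 := by
  rw [← Real.exp_nat_mul]; push_cast; ring_nf

/-- Weighted second moment of a sum of centred functions of the coordinates. -/
lemma centred_sum (he : ∀ a : ℝ, Integrable (fun x => Real.exp (a * |x|)) ν) {d : ℕ} (i0 : Fin d)
    {η : ℝ → ℝ} (hη : Continuous η) (h0 : ∫ t, η t ∂ν = 0) {A : ℝ}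
    (hb : ∀ t, |η t| ≤ A * Real.exp (2 * |t|)) :
    Integrable (fun x : Fin d → ℝ => Real.exp (4 * |x i0|) * (∑ i, η (x i)) ^ 2)
      (Measure.pi fun _ : Fin d => ν) ∧
    ∫ x : Fin d → ℝ, Real.exp (4 * |x i0|) * (∑ i, η (x i)) ^ 2 ∂(Measure.pi fun _ : Fin d => ν)
      ≤ d * (3 * A ^ 2 * ∫ t, Real.exp (12 * |t|) ∂ν) := by
  have hA : 0 ≤ A := by
    have := (abs_nonneg _).trans (hb 0)
    simpa using this
  have hB : ∀ (i j : Fin d) (x : Fin d → ℝ),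
      |Real.exp (4 * |x i0|) * (η (x i) * η (x j))| ≤ A ^ 2 *
        (Real.exp (4 * |x i0|) * Real.exp (4 * |x i|) * Real.exp (4 * |x j|)) := fun i j x => by
    have h2 : ∀ t, |η t| ≤ A * Real.exp (4 * |t|) := fun t => (hb t).trans
      (mul_le_mul_of_nonneg_left (Real.exp_le_exp.2 (by linarith [abs_nonneg t])) hA)
    rw [abs_mul, abs_mul, Real.abs_exp]
    calc _ ≤ Real.exp (4 * |x i0|) * ((A * Real.exp (4 * |x i|)) * (A * Real.exp (4 * |x j|))) := by
          gcongr <;> exact h2 _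
      _ = _ := by ring
  have hT := fun i j : Fin d => three_exp he
    (F := fun x : Fin d → ℝ => Real.exp (4 * |x i0|) * (η (x i) * η (x j)))
    (by fun_prop) i0 i j (hB i j)
  obtain ⟨p1, p2⟩ := pi_sq (μ := ν) i0 (fun t => Real.exp (4 * |t|)) (fun _ => η) (fun _ => h0)
    (fun i j => (hT i j).1)
  refine ⟨p1, p2.le.trans ?_⟩
  refine (Finset.sum_le_card_nsmul _ _ _ fun i _ => (hT i i).2).trans ?_
  simp

variable {L L1 L2 L3 : ℝ → ℝ} {C : ℝ}

/-- The constant in the final `L²` bound. -/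
def cQ (m C J α β l C' : ℝ) : ℝ :=
  15 * m * (α ^ 2 + β ^ 2 * l ^ 2 * ((C ^ 2 + J) ^ 2 + (C + J) ^ 2 + C' * C ^ 2)
    + β ^ 2 * l ^ 4 * C' ^ 2)

/-- The squared pointwise error bound has integral of order `s²`: the first two terms of `Dx` are
centred sums, whose second moments grow linearly in `d` only. -/
lemma outer_bound (he : ∀ a : ℝ, Integrable (fun x => Real.exp (a * |x|)) ν)
    (hL1 : Continuous L1) (hL2 : Continuous L2) {J α β N s l C' : ℝ} (hC : 0 ≤ C)
    (b1 : ∀ x, |L1 x| ≤ C * Real.exp |x|) (b2 : ∀ x, |L2 x| ≤ C * Real.exp |x|)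
    (hJ : 0 ≤ J) (e1 : ∫ t, (L1 t ^ 2 - J) ∂ν = 0) (e2 : ∫ t, (L2 t + J) ∂ν = 0)
    (hC' : 0 ≤ C') {d : ℕ} (i0 : Fin d)
    (hd : s ^ 2 * d = l ^ 2) {T : (Fin d → ℝ) → ℝ}
    (hT : ∀ x, |T x| ≤ N * Real.exp (2 * |x i0|) * (s * α + β * Dx L1 L2 J s C' x)) :
    ∫ x, |T x| ^ 2 ∂(Measure.pi fun _ : Fin d => ν) ≤
      N ^ 2 * s ^ 2 * cQ (∫ t, Real.exp (12 * |t|) ∂ν) C J α β l C' := by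
  set m := ∫ t, Real.exp (12 * |t|) ∂ν with hm
  set P := Measure.pi fun _ : Fin d => ν with hP
  have x2 : ∀ t : ℝ, Real.exp (2 * |t|) = Real.exp |t| ^ 2 := fun t => by
    rw [← Real.exp_nat_mul]; push_cast; rfl
  -- the five contributions
  obtain ⟨i1, v1⟩ := three_exp he (F := fun x : Fin d → ℝ => Real.exp (4 * |x i0|)) (by fun_prop)
    i0 i0 i0 (A := 1) (fun x => by
      rw [Real.abs_exp, one_mul, mul_assoc]
      exact le_mul_of_one_le_right (Real.exp_pos _).le
        (one_le_mul_of_one_le_of_one_le (exp4_ge_one _) (exp4_ge_one _)))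
  obtain ⟨i2, v2⟩ := centred_sum he i0 (η := fun t => L1 t ^ 2 - J) (by fun_prop) e1
    (A := C ^ 2 + J) (fun t => by
      have h1 := pow_le_pow_left₀ (abs_nonneg _) (b1 t) 2
      have h2 : J * 1 ≤ J * Real.exp (2 * |t|) :=
        mul_le_mul_of_nonneg_left (Real.one_le_exp (by positivity)) hJ
      refine (abs_sub _ _).trans ?_
      rw [abs_pow, abs_of_nonneg hJ, add_mul, x2]
      rw [x2] at h2
      linarith [mul_pow C (Real.exp |t|) 2])
  obtain ⟨i3, v3⟩ := centred_sum he i0 (η := fun t => L2 t + J) (by fun_prop) e2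
    (A := C + J) (fun t => by
      have h1 := b2 t
      have h2 : J * 1 ≤ J * Real.exp (2 * |t|) :=
        mul_le_mul_of_nonneg_left (Real.one_le_exp (by positivity)) hJ
      have h3 : C * Real.exp |t| ≤ C * Real.exp (2 * |t|) :=
        mul_le_mul_of_nonneg_left (Real.exp_le_exp.2 (by linarith [abs_nonneg t])) hC
      refine (abs_add_le _ _).trans ?_
      rw [abs_of_nonneg hJ, add_mul]
      linarith)
  have h4 := fun i : Fin d => three_exp he
    (F := fun x : Fin d → ℝ => Real.exp (4 * |x i0|) * L2 (x i) ^ 2) (by fun_prop)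
    i0 i i (A := C ^ 2) (fun x => by
      rw [abs_of_nonneg (by positivity), ← sq_abs]
      have h1 := pow_le_pow_left₀ (abs_nonneg _) (b2 (x i)) 2
      rw [mul_pow, ← x2] at h1
      have h2 : Real.exp (2 * |x i|) ≤ Real.exp (4 * |x i|) :=
        Real.exp_le_exp.2 (by linarith [abs_nonneg (x i)])
      calc _ ≤ Real.exp (4 * |x i0|) * (C ^ 2 * (Real.exp (4 * |x i|) * 1)) := by
            gcongr; rw [mul_one]; exact h1.trans (by gcongr)
        _ ≤ Real.exp (4 * |x i0|) * (C ^ 2 * (Real.exp (4 * |x i|) * Real.exp (4 * |x i|))) := by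
            gcongr; exact exp4_ge_one _
        _ = _ := by ring)
  have h5 := fun i : Fin d => three_exp he
    (F := fun x : Fin d → ℝ => Real.exp (4 * |x i0|) * Real.exp (4 * |x i|)) (by fun_prop)
    i0 i i (A := 1) (fun x => by
      rw [abs_of_nonneg (by positivity), one_mul]
      exact le_mul_of_one_le_right (by positivity) (exp4_ge_one _))
  have i4 : Integrable (fun x : Fin d → ℝ => ∑ i, Real.exp (4 * |x i0|) * L2 (x i) ^ 2) P :=
    integrable_finsetSum _ fun i _ => (h4 i).1
  have i5 : Integrable (fun x : Fin d → ℝ => ∑ i, Real.exp (4 * |x i0|) * Real.exp (4 * |x i|)) P :=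
    integrable_finsetSum _ fun i _ => (h5 i).1
  have v4 : ∫ x : Fin d → ℝ, ∑ i, Real.exp (4 * |x i0|) * L2 (x i) ^ 2 ∂P ≤ d * (3 * C ^ 2 * m) := by
    rw [integral_finsetSum _ fun i _ => (h4 i).1]
    refine (Finset.sum_le_card_nsmul _ _ _ fun i _ => (h4 i).2).trans ?_
    simp [hm]
  have v5 : ∫ x : Fin d → ℝ, ∑ i, Real.exp (4 * |x i0|) * Real.exp (4 * |x i|) ∂P
      ≤ d * (3 * 1 * m) := by
    rw [integral_finsetSum _ fun i _ => (h5 i).1]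
    refine (Finset.sum_le_card_nsmul _ _ _ fun i _ => (h5 i).2).trans ?_
    simp [hm]
  rw [← hm, ← hP] at v1 v2 v3
  rw [← hP] at i1 i2 i3
  set g1 : (Fin d → ℝ) → ℝ := fun x => Real.exp (4 * |x i0|) with hg1
  set g2 : (Fin d → ℝ) → ℝ := fun x => Real.exp (4 * |x i0|) * (∑ i, (L1 (x i) ^ 2 - J)) ^ 2 with hg2
  set g3 : (Fin d → ℝ) → ℝ := fun x => Real.exp (4 * |x i0|) * (∑ i, (L2 (x i) + J)) ^ 2 with hg3
  set g4 : (Fin d → ℝ) → ℝ := fun x => ∑ i, Real.exp (4 * |x i0|) * L2 (x i) ^ 2 with hg4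
  set g5 : (Fin d → ℝ) → ℝ := fun x => ∑ i, Real.exp (4 * |x i0|) * Real.exp (4 * |x i|) with hg5
  have ptw : ∀ x, |T x| ^ 2 ≤ 5 * N ^ 2 * (s ^ 2 * α ^ 2 * g1 x + β ^ 2 * s ^ 4 * g2 x
      + β ^ 2 * s ^ 4 * g3 x + β ^ 2 * s ^ 4 * C' * g4 x
      + β ^ 2 * s ^ 6 * C' ^ 2 * d * g5 x) := fun x => by
    refine (pow_le_pow_left₀ (abs_nonneg _) (hT x) 2).trans ?_
    have w4 : √(C' * ∑ i, L2 (x i) ^ 2) ^ 2 = C' * ∑ i, L2 (x i) ^ 2 :=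
      Real.sq_sqrt (mul_nonneg hC' (Finset.sum_nonneg fun _ _ => sq_nonneg _))
    have w5 : (∑ i, Real.exp (2 * |x i|)) ^ 2 ≤ d * ∑ i, Real.exp (4 * |x i|) := by
      have := sq_sum_le_card_mul_sum_sq (s := Finset.univ) (f := fun i => Real.exp (2 * |x i|))
      simpa [exp4_eq] using this
    simp only [hg1, hg2, hg3, hg4, hg5]
    rw [← Finset.mul_sum, ← Finset.mul_sum]
    set E := Real.exp (4 * |x i0|) with hE
    set S1 := ∑ i, (L1 (x i) ^ 2 - J)
    set S2 := ∑ i, (L2 (x i) + J)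
    set S4 := ∑ i, L2 (x i) ^ 2
    set r := √(C' * S4) with hr
    set q := ∑ i, Real.exp (2 * |x i|)
    set S5 := ∑ i, Real.exp (4 * |x i|)
    have hEp : 0 < E := Real.exp_pos _
    have five : ∀ a b c e f : ℝ, (a + b + c + e + f) ^ 2 ≤
        5 * (a ^ 2 + b ^ 2 + c ^ 2 + e ^ 2 + f ^ 2) := fun a b c e f => by
      nlinarith [sq_nonneg (a - b), sq_nonneg (a - c), sq_nonneg (a - e), sq_nonneg (a - f),
        sq_nonneg (b - c), sq_nonneg (b - e), sq_nonneg (b - f), sq_nonneg (c - e),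
        sq_nonneg (c - f), sq_nonneg (e - f)]
    have hDx : Dx L1 L2 J s C' x = s ^ 2 * |S1| + s ^ 2 * |S2| + s ^ 2 * r + s ^ 3 * C' * q := rfl
    calc (N * Real.exp (2 * |x i0|) * (s * α + β * Dx L1 L2 J s C' x)) ^ 2
        = N ^ 2 * E * (s * α + β * s ^ 2 * |S1| + β * s ^ 2 * |S2| + β * s ^ 2 * r
          + β * s ^ 3 * C' * q) ^ 2 := by
          rw [hE, exp4_eq, hDx]; ring
      _ ≤ N ^ 2 * E * (5 * ((s * α) ^ 2 + (β * s ^ 2 * |S1|) ^ 2 + (β * s ^ 2 * |S2|) ^ 2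
          + (β * s ^ 2 * r) ^ 2 + (β * s ^ 3 * C' * q) ^ 2)) := by
          gcongr; exact five _ _ _ _ _
      _ = 5 * N ^ 2 * (s ^ 2 * α ^ 2 * E + β ^ 2 * s ^ 4 * (E * |S1| ^ 2)
          + β ^ 2 * s ^ 4 * (E * |S2| ^ 2) + β ^ 2 * s ^ 4 * (E * r ^ 2)
          + β ^ 2 * s ^ 6 * C' ^ 2 * (E * q ^ 2)) := by ring
      _ ≤ 5 * N ^ 2 * (s ^ 2 * α ^ 2 * E + β ^ 2 * s ^ 4 * (E * |S1| ^ 2)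
          + β ^ 2 * s ^ 4 * (E * |S2| ^ 2) + β ^ 2 * s ^ 4 * (E * r ^ 2)
          + β ^ 2 * s ^ 6 * C' ^ 2 * (E * (d * S5))) := by gcongr
      _ = _ := by rw [w4, sq_abs, sq_abs]; ring
  have j1 : Integrable (fun x => s ^ 2 * α ^ 2 * g1 x) P := i1.const_mul _
  have j2 : Integrable (fun x => β ^ 2 * s ^ 4 * g2 x) P := i2.const_mul _
  have j3 : Integrable (fun x => β ^ 2 * s ^ 4 * g3 x) P := i3.const_mul _
  have j4 : Integrable (fun x => β ^ 2 * s ^ 4 * C' * g4 x) P := i4.const_mul _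
  have j5 : Integrable (fun x => β ^ 2 * s ^ 6 * C' ^ 2 * d * g5 x) P := i5.const_mul _
  have k2 : Integrable (fun x => s ^ 2 * α ^ 2 * g1 x + β ^ 2 * s ^ 4 * g2 x) P := j1.add j2
  have k3 : Integrable (fun x => s ^ 2 * α ^ 2 * g1 x + β ^ 2 * s ^ 4 * g2 x
      + β ^ 2 * s ^ 4 * g3 x) P := k2.add j3
  have k4 : Integrable (fun x => s ^ 2 * α ^ 2 * g1 x + β ^ 2 * s ^ 4 * g2 x
      + β ^ 2 * s ^ 4 * g3 x + β ^ 2 * s ^ 4 * C' * g4 x) P := k3.add j4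
  have k5 : Integrable (fun x => s ^ 2 * α ^ 2 * g1 x + β ^ 2 * s ^ 4 * g2 x
      + β ^ 2 * s ^ 4 * g3 x + β ^ 2 * s ^ 4 * C' * g4 x + β ^ 2 * s ^ 6 * C' ^ 2 * d * g5 x) P :=
    k4.add j5
  refine (integral_mono_of_nonneg (Eventually.of_forall fun x => by positivity)
    (k5.const_mul (5 * N ^ 2)) (Eventually.of_forall ptw)).trans ?_
  rw [integral_const_mul, integral_add k4 j5, integral_add k3 j4, integral_add k2 j3,
    integral_add j1 j2, integral_const_mul, integral_const_mul, integral_const_mul,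
    integral_const_mul, integral_const_mul]
  calc _ ≤ 5 * N ^ 2 * (s ^ 2 * α ^ 2 * (3 * 1 * m)
        + β ^ 2 * s ^ 4 * (d * (3 * (C ^ 2 + J) ^ 2 * m))
        + β ^ 2 * s ^ 4 * (d * (3 * (C + J) ^ 2 * m)) + β ^ 2 * s ^ 4 * C' * (d * (3 * C ^ 2 * m))
        + β ^ 2 * s ^ 6 * C' ^ 2 * d * (d * (3 * 1 * m))) := by gcongr
    _ = 15 * N ^ 2 * m * s ^ 2 * (α ^ 2 + β ^ 2 * (s ^ 2 * d) *
        ((C ^ 2 + J) ^ 2 + (C + J) ^ 2 + C' * C ^ 2) + β ^ 2 * (s ^ 2 * d) ^ 2 * C' ^ 2) := by ring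
    _ = _ := by rw [hd, cQ]; ring

end outer

/-- **Proposition.** There is a constant `C₂` with
`‖G f - G_d f‖_{L²(ρ_d)} ≤ C₂ (Σ_{i=1}^3 ‖f⁽ⁱ⁾‖_{∞,1/2}) √(log d / d)` for every `f ∈ S³`
and every `d ∈ ℕ ∖ {1}`. -/
theorem stmt1 (ρ : ℝ → ℝ) (hmeas : Measurable ρ) (hpos : ∀ x, 0 < ρ x)
    (hint : ∫ x, ρ x = 1) (hlog : MemS 4 fun x => Real.log (ρ x))
    (htail : SuperExpTails ρ) (l : ℝ) (hl : 0 < l) :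
    ∃ C₂ : ℝ, ∀ (d : ℕ) [NeZero d], 2 ≤ d → ∀ f : ℝ → ℝ, MemS 3 f →
      (∫ x, |Gop ρ l f (x 0) - Gd ρ l d f x| ^ (2:ℕ) ∂(pm ρ d)) ^ ((1:ℝ)/2) ≤
        C₂ * (∑ i ∈ Finset.Icc 1 3, normIS (iteratedDeriv i f) (1/2)) *
          Real.sqrt (Real.log d / d) := by
  have HL := memS_expC3 hlog (by norm_num) one_pos le_rfl
  set C := ∑ i ∈ Finset.Icc 1 3, normIS (iteratedDeriv i fun x => Real.log (ρ x)) 1 with hC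
  change ExpC3 _ (dl ρ) (d2l ρ) _ C at HL
  have := nu_prob hpos hint
  have he := nu_exp hmeas hpos HL.hd1 htail
  have hJ := Jc_pos hmeas hpos HL htail
  obtain ⟨K, hK, HK⟩ := gen_bound HL hl hJ
  -- `α` and `β` are the coefficients of `s` and `Dx` in `gen_bound`
  set α := l ^ 2 * gK (l + 3) * (1 + 2 * C) with hα
  set β := l ^ 2 * (1 + C) * K with hβ
  set Q := cQ (∫ t, Real.exp (12 * |t|) ∂(nu ρ)) C (Jc ρ) α β l (cD C l) with hQ
  refine ⟨√(l ^ 2 * Q / Real.log 2), fun d _ hd2 f hf => ?_⟩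
  have Hf := memS_expC3 hf le_rfl (by norm_num : (0:ℝ) < 1 / 2) (by norm_num)
  set N := ∑ i ∈ Finset.Icc 1 3, normIS (iteratedDeriv i f) (1/2) with hN
  have hN0 := Hf.nonneg
  set s := l / √d with hs
  have hdr : (2:ℝ) ≤ d := by exact_mod_cast hd2
  have hd1 : 1 ≤ √(d:ℝ) := Real.one_le_sqrt.2 (by linarith)
  have hs0 : 0 ≤ s := by positivity
  have hsl : s ≤ l := div_le_self hl.le hd1
  have hs2 : s ^ 2 = l ^ 2 / d := by rw [hs, div_pow, Real.sq_sqrt (by positivity)]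
  have hsd : s ^ 2 * d = l ^ 2 := by rw [hs2]; field_simp
  have key : ∫ x, |Gop ρ l f (x 0) - Gd ρ l d f x| ^ (2:ℕ) ∂(pm ρ d) ≤ N ^ 2 * s ^ 2 * Q := by
    refine outer_bound he HL.cont1 HL.cont2 HL.nonneg HL.b1 HL.b2 hJ.le
      (eta1_mean hmeas hpos hint HL htail) (eta2_mean hmeas hpos hint HL htail)
      (zero_le_one.trans (cD_facts HL.nonneg l).1) 0 hsd fun x => ?_
    have b := HK f _ _ _ N Hf d s hs0 hsl hsd x 0
    rw [← Gd_eq hmeas hpos hl Hf.cont x, abs_sub_comm] at b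
    have e : Gop ρ l f (x 0) = l ^ 2 * stdCDF (-(l * √(Jc ρ)) / 2) *
        (deriv (deriv f) (x 0) + dl ρ (x 0) * deriv f (x 0)) := by
      rw [Gop, hc]; ring
    rw [← e] at b
    refine b.trans (le_of_eq ?_)
    rw [hα, hβ]
    ring
  -- the squared error is `O(1/d)`; the logarithm enters only through `log 2 ≤ log d`
  have hl2 : 0 < Real.log 2 := Real.log_pos (by norm_num)
  have hlog2 : Real.log 2 ≤ Real.log d := Real.log_le_log two_pos hdr
  have hQ0 : 0 ≤ Q := by
    have h1 : 0 ≤ ∫ t, Real.exp (12 * |t|) ∂(nu ρ) := integral_nonneg fun _ => (Real.exp_pos _).le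
    have h2 := zero_le_one.trans (cD_facts HL.nonneg l).1
    rw [hQ, cQ]
    positivity
  rw [← Real.sqrt_eq_rpow]
  calc √(∫ x, |Gop ρ l f (x 0) - Gd ρ l d f x| ^ (2:ℕ) ∂(pm ρ d))
      ≤ √(N ^ 2 * (l ^ 2 * Q / Real.log 2 * (Real.log d / d))) := by
        refine Real.sqrt_le_sqrt (key.trans ?_)
        rw [mul_assoc, hs2]
        refine mul_le_mul_of_nonneg_left ?_ (sq_nonneg N)
        calc l ^ 2 / d * Q = l ^ 2 * Q / Real.log 2 * (Real.log 2 / d) := by field_simp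
          _ ≤ _ := by gcongr
    _ = _ := by
        rw [Real.sqrt_mul (sq_nonneg N), Real.sqrt_sq hN0, Real.sqrt_mul (by positivity)]
        ring
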